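/- Let A be a subhomogeneous C*-algebra and B any C*-algebra. Then the Banach space projective tensor product A ⊗_γ B, with its canonical Banach *-algebra structure, is symmetric. -/

import Mathlib

open scoped TensorProduct
open Pointwise

universe u

noncomputable section

/-- A C⋆-norm on a complex `*`-algebra.  On a matrix algebra over a C⋆-algebra such a
norm is unique, namely the canonical C⋆-norm. -/
structure IsCStarNorm {M : Type*} [NonUnitalRing M] [StarRing M] [Module ℂ M]
    (N : M → ℝ) : Prop where
  add_le : ∀ x y, N (x + y) ≤ N x + N y
  smul_eq : ∀ (c : ℂ) (x : M), N (c • x) = ‖c‖ * N x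
  eq_zero_of : ∀ x, N x = 0 → x = 0
  mul_le : ∀ x y, N (x * y) ≤ N x * N y
  star_mul_self : ∀ x, N (star x * x) = N x * N x

/-- The operator space projective tensor norm `‖·‖_∧` on the algebraic tensor product
`A ⊗ B`, relative to given families of matrix norms on `A` and `B`:
`‖u‖_∧ = inf { ‖α‖ ‖v‖ ‖w‖ ‖β‖ : u = α (v ⊗ w) β }` where `v ∈ M_p(A)`, `w ∈ M_q(B)`,
`α ∈ M_{1,pq}(ℂ)` and `β ∈ M_{pq,1}(ℂ)` (row and column vectors carrying the Euclidean
norm, which is their norm as scalar matrices). -/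
noncomputable def osProjNorm {A B : Type u}
    [AddCommGroup A] [Module ℂ A] [AddCommGroup B] [Module ℂ B]
    (NA : ∀ p : ℕ, Matrix (Fin p) (Fin p) A → ℝ)
    (NB : ∀ q : ℕ, Matrix (Fin q) (Fin q) B → ℝ) (u : A ⊗[ℂ] B) : ℝ :=
  sInf { r : ℝ | ∃ (p q : ℕ) (α : Fin p × Fin q → ℂ) (v : Matrix (Fin p) (Fin p) A)
      (w : Matrix (Fin q) (Fin q) B) (β : Fin p × Fin q → ℂ),
      u = ∑ ik : Fin p × Fin q, ∑ jl : Fin p × Fin q,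
            (α ik * β jl) • (v ik.1 jl.1 ⊗ₜ[ℂ] w ik.2 jl.2) ∧
      r = Real.sqrt (∑ ik, ‖α ik‖ ^ 2) * NA p v * NB q w *
            Real.sqrt (∑ jl, ‖β jl‖ ^ 2) }

/-- `X` is a completion of the algebraic tensor product `A ⊗ B` with respect to the
norm `ν`, via the (necessarily isometric) dense embedding `ι`, and the multiplication and
involution of `X` are the canonical ones induced from `A` and `B`.  Applied with
`ν = osProjNorm NA NB` (for the canonical matrix C⋆-norms `NA`, `NB`) this characterizes
the Banach `*`-algebra `A ⊗̂ B` (the operator space projective tensor product) up to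
isometric `*`-isomorphism; applied with `ν = bsProjNorm` it characterizes the Banach
space projective tensor product `A ⊗_γ B`. -/
structure IsTensorCompletion {A B : Type u} [NonUnitalRing A] [StarRing A] [Module ℂ A]
    [NonUnitalRing B] [StarRing B] [Module ℂ B] (ν : A ⊗[ℂ] B → ℝ)
    (X : Type u) [NonUnitalNormedRing X] [StarRing X] [NormedSpace ℂ X] [CompleteSpace X]
    (ι : A ⊗[ℂ] B →ₗ[ℂ] X) : Prop where
  norm_eq : ∀ u, ‖ι u‖ = ν u
  dense : DenseRange ι
  mul_tmul : ∀ (a c : A) (b d : B),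
    ι (a ⊗ₜ[ℂ] b) * ι (c ⊗ₜ[ℂ] d) = ι ((a * c) ⊗ₜ[ℂ] (b * d))
  star_tmul : ∀ (a : A) (b : B), star (ι (a ⊗ₜ[ℂ] b)) = ι (star a ⊗ₜ[ℂ] star b)

/-- The product ideal `S ⊗̂ T`: the closure in `X` (a completion of `A ⊗ B`) of the span of
elementary tensors `a ⊗ b` with `a ∈ S`, `b ∈ T`. -/
def tensorIdeal {A B : Type u} [NonUnitalRing A] [StarRing A] [Module ℂ A]
    [NonUnitalRing B] [StarRing B] [Module ℂ B]
    {X : Type u} [NonUnitalNormedRing X] [StarRing X] [NormedSpace ℂ X] [CompleteSpace X]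
    (ι : A ⊗[ℂ] B →ₗ[ℂ] X) (S : Set A) (T : Set B) : Set X :=
  closure (ι '' (Submodule.span ℂ (Set.image2 (fun a b => a ⊗ₜ[ℂ] b) S T)))

/-- A closed prime (two-sided) ideal of a Banach algebra: a proper closed two-sided ideal `K`
such that whenever the product of two closed two-sided ideals is contained in `K`, one of them
is contained in `K`. -/
def IsClosedPrimeIdeal {Y : Type u} [NonUnitalNormedRing Y] (K : TwoSidedIdeal Y) : Prop :=
  IsClosed (K : Set Y) ∧ (K : Set Y) ≠ Set.univ ∧
    ∀ I J : TwoSidedIdeal Y, IsClosed (I : Set Y) → IsClosed (J : Set Y) →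
      (∀ x ∈ I, ∀ y ∈ J, x * y ∈ K) → (I : Set Y) ⊆ (K : Set Y) ∨ (J : Set Y) ⊆ (K : Set Y)

/-- An irreducible continuous `*`-representation of a Banach `*`-algebra `Y` on a complex
Hilbert space. -/
structure IrreducibleRepOn (Y : Type u)
    [NonUnitalNormedRing Y] [StarRing Y] [NormedSpace ℂ Y] where
  H : Type u
  [normH : NormedAddCommGroup H]
  [ipsH : InnerProductSpace ℂ H]
  [csH : CompleteSpace H]
  π : Y →⋆ₙₐ[ℂ] (H →L[ℂ] H)
  continuous : Continuous π
  nonzero : ∃ y, π y ≠ 0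
  irreducible : ∀ S : Submodule ℂ H, IsClosed (S : Set H) →
    (∀ y : Y, ∀ v ∈ S, π y v ∈ S) → S = ⊥ ∨ S = ⊤

/-- A primitive ideal: the kernel of an irreducible `*`-representation. -/
def IsPrimitiveIdeal {Y : Type u} [NonUnitalNormedRing Y] [StarRing Y] [NormedSpace ℂ Y]
    (K : TwoSidedIdeal Y) : Prop :=
  ∃ ρ : IrreducibleRepOn Y, ∀ y, y ∈ K ↔ ρ.π y = 0

/-- A subset `K` of a ring is modular (as an ideal) if there is a relative unit `e`
with `x * e - x ∈ K` and `e * x - x ∈ K` for every `x`. -/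
def IsModularIdealSet {Y : Type u} [NonUnitalRing Y] (K : Set Y) : Prop :=
  ∃ e : Y, ∀ x : Y, x * e - x ∈ K ∧ e * x - x ∈ K

/-- A maximal modular (two-sided) ideal: a modular ideal which is proper and maximal among
proper two-sided ideals. -/
def IsMaximalModularIdeal {Y : Type u} [NonUnitalRing Y] (K : TwoSidedIdeal Y) : Prop :=
  IsModularIdealSet (K : Set Y) ∧ (K : Set Y) ≠ Set.univ ∧
    ∀ L : TwoSidedIdeal Y, (K : Set Y) ⊆ (L : Set Y) →
      (L : Set Y) = (K : Set Y) ∨ (L : Set Y) = Set.univ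

/-- The operator norm of a `p × p` matrix of bounded operators on a Hilbert space `H`,
viewed as an operator on the `ℓ²`-direct sum `H ⊕ ⋯ ⊕ H`. -/
noncomputable def opMatrixNorm {H : Type u} [NormedAddCommGroup H] [InnerProductSpace ℂ H]
    {p : ℕ} (T : Matrix (Fin p) (Fin p) (H →L[ℂ] H)) : ℝ :=
  sSup { r : ℝ | ∃ x : Fin p → H, (∑ i, ‖x i‖ ^ 2) ≤ 1 ∧
      r = Real.sqrt (∑ i, ‖∑ j, (T i j) (x j)‖ ^ 2) }

/-- An operator algebra structure on a Banach algebra `Y`: a bicontinuous algebra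
homomorphism of `Y` into the bounded operators on some Hilbert space. -/
structure OperatorAlgebraEmbedding (Y : Type u) [NonUnitalNormedRing Y] [NormedSpace ℂ Y] where
  H : Type u
  [normH : NormedAddCommGroup H]
  [ipsH : InnerProductSpace ℂ H]
  [csH : CompleteSpace H]
  ρ : Y →ₙₐ[ℂ] (H →L[ℂ] H)
  c : ℝ
  C : ℝ
  c_pos : 0 < c
  lower : ∀ y, c * ‖y‖ ≤ ‖ρ y‖
  upper : ∀ y, ‖ρ y‖ ≤ C * ‖y‖

/-- The matrix norms on `Y` induced by an operator algebra embedding, giving `Y` its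
operator space structure: the norm of `v ∈ M_p(Y)` is the operator norm of the matrix
of operators obtained by applying the embedding entrywise. -/
noncomputable def OperatorAlgebraEmbedding.matrixNorm {Y : Type u}
    [NonUnitalNormedRing Y] [NormedSpace ℂ Y] (e : OperatorAlgebraEmbedding Y)
    (p : ℕ) (v : Matrix (Fin p) (Fin p) Y) : ℝ :=
  letI := e.normH; letI := e.ipsH
  opMatrixNorm (v.map e.ρ)

/-- The Banach space projective tensor norm `‖·‖_γ` on the algebraic tensor product. -/
noncomputable def bsProjNorm {A B : Type u} [NonUnitalNormedRing A] [NormedSpace ℂ A]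
    [NonUnitalNormedRing B] [NormedSpace ℂ B] (u : A ⊗[ℂ] B) : ℝ :=
  sInf { r : ℝ | ∃ (n : ℕ) (a : Fin n → A) (b : Fin n → B),
      u = ∑ i, a i ⊗ₜ[ℂ] b i ∧ r = ∑ i, ‖a i‖ * ‖b i‖ }

/-- A C⋆-algebra `A` is subhomogeneous if there is `n : ℕ` bounding the (finite)
dimensions of all its irreducible `*`-representations. -/
def IsSubhomogeneous (A : Type u) [NonUnitalCStarAlgebra A] : Prop :=
  ∃ n : ℕ, ∀ ρ : IrreducibleRepOn A,
    letI := ρ.normH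
    letI := ρ.ipsH
    FiniteDimensional ℂ ρ.H ∧ Module.finrank ℂ ρ.H ≤ n



section BSHelpers
open scoped ComplexOrder

/-- approximate right unit inside a closed two-sided ideal. -/
lemma BS_approx {A : Type*} [CStarAlgebra A] [PartialOrder A] [StarOrderedRing A]
    (P : Submodule ℂ A) (hl : ∀ a : A, ∀ p ∈ P, a * p ∈ P) (hr : ∀ p ∈ P, ∀ a : A, p * a ∈ P)
    (p : A) (hp : star p * p ∈ P) (ε : ℝ) (hε : 0 < ε) :
    ∃ u ∈ P, IsSelfAdjoint (1 - u) ∧ ‖1 - u‖ ≤ 1 ∧ ‖p * (1 - u)‖ ≤ ε := by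
  set s := star p * p with hs
  have hsn : 0 ≤ s := star_mul_self_nonneg p
  have hsa : IsSelfAdjoint s := .star_mul_self p
  have hspec : ∀ t ∈ spectrum ℝ s, 0 ≤ t := fun t ht => spectrum_nonneg_of_nonneg hsn ht
  set m : ℝ := 1 / ε ^ 2 with hm
  have hm0 : 0 < m := by positivity
  have hpos : ∀ t ∈ spectrum ℝ s, 0 < 1 + m * t := fun t ht => by
    have := hspec t ht; positivity
  have hc : ContinuousOn (fun t : ℝ => 1 / (1 + m * t)) (spectrum ℝ s) := by
    apply ContinuousOn.div (by fun_prop) (by fun_prop)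
    intro t ht; exact (hpos t ht).ne'
  set v := cfc (fun t : ℝ => 1 / (1 + m * t)) s with hv
  have hvs : IsSelfAdjoint v := cfc_predicate _ _
  refine ⟨1 - v, ?_, ?_, ?_, ?_⟩
  · have h1 : 1 - v = cfc (fun t : ℝ => m / (1 + m * t)) s * s := by
      conv_rhs => rw [← cfc_id ℝ s hsa]
      have hc2 : ContinuousOn (fun t : ℝ => m / (1 + m * t)) (spectrum ℝ s) := by
        apply ContinuousOn.div (by fun_prop) (by fun_prop)
        intro t ht; exact (hpos t ht).ne'
      rw [cfc_id ℝ s hsa, hv]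
      nth_rewrite 3 [← cfc_id ℝ s hsa]
      rw [← cfc_mul _ _ s hc2 (by fun_prop), ← cfc_one ℝ s, ← cfc_sub _ _ s (by fun_prop) hc]
      apply cfc_congr
      intro t ht
      have := (hpos t ht).ne'
      simp
      field_simp
      ring
    rw [h1]
    exact hl _ _ hp
  · simpa using hvs
  · rw [sub_sub_cancel]
    apply norm_cfc_le zero_le_one
    intro t ht
    have h0 := hspec t ht
    rw [Real.norm_of_nonneg (by positivity), div_le_one (hpos t ht)]
    nlinarith
  · rw [sub_sub_cancel]
    have h2 : ‖p * v‖ ^ 2 ≤ ε ^ 2 := by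
      rw [sq, ← CStarRing.norm_star_mul_self, star_mul, hvs.star_eq]
      have h3 : v * star p * (p * v) = cfc (fun t : ℝ => 1 / (1 + m * t) * t * (1 / (1 + m * t))) s := by
        rw [cfc_mul (fun t : ℝ => 1 / (1 + m * t) * t) _ s (hc.mul continuousOn_id) hc, cfc_mul _ _ s hc (by fun_prop), cfc_id' ℝ s hsa, ← hv, hs]
        simp only [mul_assoc]
      rw [h3]
      apply norm_cfc_le (by positivity)
      intro t ht
      have h0 := hspec t ht
      have h1 := hpos t ht
      rw [Real.norm_of_nonneg (by positivity)]
      have : ε ^ 2 = 1 / m := by rw [hm]; simp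
      rw [this, div_mul_eq_mul_div, div_mul_div_comm, div_le_div_iff₀ (by positivity) hm0]
      nlinarith [mul_nonneg hm0.le h0, mul_nonneg (mul_nonneg hm0.le h0) (mul_nonneg hm0.le h0)]
    exact abs_le_of_sq_le_sq' h2 hε.le |>.2

lemma BS_mem_of_star_mul_self {A : Type*} [CStarAlgebra A] [PartialOrder A] [StarOrderedRing A]
    (P : Submodule ℂ A) (hl : ∀ a : A, ∀ p ∈ P, a * p ∈ P) (hr : ∀ p ∈ P, ∀ a : A, p * a ∈ P)
    (hcl : IsClosed (P : Set A)) (p : A) (hp : star p * p ∈ P) : p ∈ P := by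
  rw [← SetLike.mem_coe, ← hcl.closure_eq, Metric.mem_closure_iff]
  intro ε hε
  obtain ⟨u, hu, -, -, h⟩ := BS_approx P hl hr p hp (ε/2) (by positivity)
  refine ⟨p * u, hl _ _ hu, ?_⟩
  rw [dist_eq_norm]
  rw [mul_sub, mul_one] at h
  linarith

lemma BS_star_mem {A : Type*} [CStarAlgebra A] [PartialOrder A] [StarOrderedRing A]
    (P : Submodule ℂ A) (hl : ∀ a : A, ∀ p ∈ P, a * p ∈ P) (hr : ∀ p ∈ P, ∀ a : A, p * a ∈ P)
    (hcl : IsClosed (P : Set A)) (p : A) (hp : p ∈ P) : star p ∈ P :=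
  BS_mem_of_star_mul_self P hl hr hcl _ (by rw [star_star]; exact hr _ hp _)

/-- key estimate -/
lemma BS_notMem_cone {A : Type*} [CStarAlgebra A] [PartialOrder A] [StarOrderedRing A]
    (P : Submodule ℂ A) (hl : ∀ a : A, ∀ p ∈ P, a * p ∈ P) (hr : ∀ p ∈ P, ∀ a : A, p * a ∈ P)
    (hcl : IsClosed (P : Set A)) (c : A) (hc : c ∉ P) :
    -(star c * c) ∉ closure {x : A | ∃ a p, 0 ≤ a ∧ p ∈ P ∧ x = a + p} := by
  intro hmem
  apply hc
  rw [← SetLike.mem_coe, ← hcl.closure_eq, Metric.mem_closure_iff]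
  intro ε hε
  rw [Metric.mem_closure_iff] at hmem
  obtain ⟨x, ⟨a, p, ha, hp, rfl⟩, hd⟩ := hmem (ε^2/4) (by positivity)
  obtain ⟨u, hu, hus, hu1, h⟩ := BS_approx P hl hr p (hl _ _ hp) (ε^2/4) (by positivity)
  refine ⟨c * u, hl _ _ hu, ?_⟩
  rw [dist_eq_norm, ← mul_one_sub]
  set v := 1 - u
  have e1 : star (c * v) * (c * v) ≤ v * (star c * c + a) * v := by
    have : v * (star c * c + a) * v - star (c * v) * (c * v) = star v * a * v := by
      rw [star_mul, hus.star_eq]; noncomm_ring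
    rw [← sub_nonneg, this]
    exact star_left_conjugate_nonneg ha v
  have e2 : ‖c * v‖ * ‖c * v‖ ≤ ‖v * (star c * c + a) * v‖ := by
    rw [← CStarRing.norm_star_mul_self]
    exact CStarAlgebra.norm_le_norm_of_nonneg_of_le (star_mul_self_nonneg _) e1
  have e3 : v * (star c * c + a) * v = v * (star c * c + (a + p)) * v - v * (p * v) := by noncomm_ring
  have e4 : ‖v * (star c * c + (a + p)) * v‖ ≤ ε^2/4 := by
    rw [dist_eq_norm, ← norm_neg] at hd
    have : -(-(star c * c) - (a + p)) = star c * c + (a + p) := by abel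
    rw [this] at hd
    calc _ ≤ ‖v‖ * ‖star c * c + (a+p)‖ * ‖v‖ := norm_mul₃_le
      _ ≤ 1 * (ε^2/4) * 1 := by gcongr
      _ = _ := by ring
  have e5 : ‖v * (p * v)‖ ≤ ε^2/4 := by
    calc _ ≤ ‖v‖ * ‖p * v‖ := norm_mul_le _ _
      _ ≤ 1 * (ε^2/4) := by gcongr
      _ = _ := by ring
  have e6 := norm_sub_le (v * (star c * c + (a + p)) * v) (v * (p * v))
  rw [← e3] at e6
  nlinarith [norm_nonneg (c * v)]


structure BSState {A : Type*} [CStarAlgebra A] [PartialOrder A]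
    (P : Submodule ℂ A) (f : A → ℂ) : Prop where
  add : ∀ x y, f (x + y) = f x + f y
  smul : ∀ (c : ℂ) x, f (c • x) = c * f x
  nonneg : ∀ x, 0 ≤ x → 0 ≤ f x
  one : f 1 = 1
  vanish : ∀ x ∈ P, f x = 0

/-- the positive linear functional of a state. -/
noncomputable def BSState.toPLM {A : Type*} [CStarAlgebra A] [PartialOrder A] [StarOrderedRing A]
    {P : Submodule ℂ A} {f : A → ℂ} (h : BSState P f) : A →ₚ[ℂ] ℂ :=
  PositiveLinearMap.mk₀ ⟨⟨f, h.add⟩, h.smul⟩ h.nonneg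

lemma BSState.bound {A : Type*} [CStarAlgebra A] [PartialOrder A] [StarOrderedRing A]
    {P : Submodule ℂ A} {f : A → ℂ} (h : BSState P f) (a : A) : ‖f a‖ ≤ 2 * ‖a‖ := by
  have key : ∀ x : A, IsSelfAdjoint x → ‖f x‖ ≤ ‖x‖ := by
    intro x hx
    have h1 : f x ≤ f (algebraMap ℝ A ‖x‖) := h.toPLM.apply_le_of_isSelfAdjoint x hx
    have h2 : f (-x) ≤ f (algebraMap ℝ A ‖-x‖) := h.toPLM.apply_le_of_isSelfAdjoint (-x) hx.neg
    have h3 : ∀ r : ℝ, f (algebraMap ℝ A r) = r := by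
      intro r
      have : algebraMap ℝ A r = (r : ℂ) • (1 : A) := by
        rw [Algebra.algebraMap_eq_smul_one]; simp
      rw [this, h.smul, h.one, mul_one]
    have h4 : f (-x) = - f x := by
      have := h.smul (-1) x
      simpa using this
    rw [h3] at h1 h2
    rw [h4, norm_neg] at h2
    rw [Complex.le_def] at h1 h2
    have him : (f x).im = 0 := by simpa using h1.2
    rw [← Complex.re_add_im (f x), him]
    simp only [Complex.ofReal_zero, zero_mul, add_zero, Complex.norm_real, Real.norm_eq_abs]
    rw [abs_le]
    have a1 := h1.1
    have a2 := h2.1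
    simp at a1 a2
    constructor <;> linarith
  have h1 := key (realPart a : A) (realPart a).2
  have h2 := key (imaginaryPart a : A) (imaginaryPart a).2
  have e : a = (realPart a : A) + Complex.I • (imaginaryPart a : A) := (realPart_add_I_smul_imaginaryPart a).symm
  have : f a = f (realPart a : A) + Complex.I * f (imaginaryPart a : A) := by
    conv_lhs => rw [e]
    rw [h.add, h.smul]
  rw [this]
  refine (norm_add_le _ _).trans ?_
  rw [norm_mul, Complex.norm_I, one_mul]
  have n1 : ‖(realPart a : A)‖ ≤ ‖a‖ := realPart.norm_le a
  have n2 : ‖(imaginaryPart a : A)‖ ≤ ‖a‖ := imaginaryPart.norm_le a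
  linarith

lemma BS_exists_state {A : Type*} [CStarAlgebra A] [PartialOrder A] [StarOrderedRing A]
    (P : Submodule ℂ A) (hl : ∀ a : A, ∀ p ∈ P, a * p ∈ P) (hr : ∀ p ∈ P, ∀ a : A, p * a ∈ P)
    (hcl : IsClosed (P : Set A)) (c : A) (hc : c ∉ P) :
    ∃ f : A → ℂ, BSState P f ∧ f (star c * c) ≠ 0 := by
  have hno := BS_notMem_cone P hl hr hcl c hc
  let C0 : PointedCone ℝ A :=
    { carrier := {x : A | ∃ a p, 0 ≤ a ∧ p ∈ P ∧ x = a + p}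
      add_mem' := by
        rintro _ _ ⟨a, p, ha, hp, rfl⟩ ⟨a', p', ha', hp', rfl⟩
        exact ⟨a + a', p + p', add_nonneg ha ha', P.add_mem hp hp', by abel⟩
      zero_mem' := ⟨0, 0, le_rfl, P.zero_mem, by simp⟩
      smul_mem' := by
        rintro r _ ⟨a, p, ha, hp, rfl⟩
        refine ⟨(r : ℝ) • a, (r : ℝ) • p, smul_nonneg r.2 ha, ?_, ?_⟩
        · have : (r : ℝ) • p = ((r : ℝ) : ℂ) • p := by simp
          rw [this]; exact P.smul_mem _ hp
        · rw [← smul_add]; rfl }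
  let C : ProperCone ℝ A := ⟨C0.closure, isClosed_closure⟩
  obtain ⟨f, hf, hfc⟩ := C.hyperplane_separation_point (x₀ := -(star c * c)) hno
  have hmem : ∀ a p, 0 ≤ a → p ∈ P → 0 ≤ f (a + p) := by
    intro a p ha hp
    exact hf _ (subset_closure ⟨a, p, ha, hp, rfl⟩)
  have hpos : ∀ a, 0 ≤ a → 0 ≤ f a := fun a ha => by simpa using hmem a 0 ha P.zero_mem
  have hP : ∀ p ∈ P, f p = 0 := fun p hp => by
    have h1 := hmem 0 p le_rfl hp
    have h2 := hmem 0 (-p) le_rfl (P.neg_mem hp)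
    simp at h1 h2
    linarith
  have hcc : 0 < f (star c * c) := by simpa using hfc
  have hone : 0 < f 1 := by
    have h1 : star c * c ≤ algebraMap ℝ A ‖star c * c‖ :=
      IsSelfAdjoint.le_algebraMap_norm_self (.star_mul_self c)
    have h2 := hpos _ (sub_nonneg.2 h1)
    rw [map_sub, Algebra.algebraMap_eq_smul_one, map_smul, smul_eq_mul] at h2
    by_contra h3
    have := mul_nonpos_of_nonneg_of_nonpos (norm_nonneg (star c * c)) (not_lt.1 h3)
    linarith
  let g : A → ℂ := fun a => ((f (realPart a : A) / f 1 : ℝ) : ℂ) + Complex.I * ((f (imaginaryPart a : A) / f 1 : ℝ) : ℂ)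
  have hg : ∀ a, 0 ≤ a → g a = ((f a / f 1 : ℝ) : ℂ) := by
    intro a ha
    have hs : IsSelfAdjoint a := .of_nonneg ha
    simp only [g, hs.coe_realPart, hs.imaginaryPart]
    simp
  refine ⟨g, ⟨?_, ?_, ?_, ?_, ?_⟩, ?_⟩
  · intro x y
    simp only [g, map_add, AddSubgroup.coe_add]
    push_cast
    ring
  · intro z x
    have hre : ∀ (r : ℝ) (y : selfAdjoint A), f ((r • y : selfAdjoint A) : A) = r * f y := by
      intro r y
      rw [selfAdjoint.val_smul, map_smul, smul_eq_mul]
    simp only [g, realPart_smul, imaginaryPart_smul, AddSubgroup.coe_add, AddSubgroup.coe_sub, map_add, map_sub, hre]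
    apply Complex.ext
    · simp; ring
    · simp; ring
  · intro x hx
    rw [hg x hx]
    exact_mod_cast div_nonneg (hpos x hx) hone.le
  · rw [hg 1 zero_le_one]
    simp [hone.ne']
  · intro x hx
    have hsx := BS_star_mem P hl hr hcl x hx
    have h1 : (realPart x : A) ∈ P := by
      rw [realPart_apply_coe]
      have : ((2 : ℝ)⁻¹ • (x + star x) : A) = ((2 : ℂ)⁻¹) • (x + star x) := by
        rw [← Complex.coe_smul]; simp
      rw [this]
      exact P.smul_mem _ (P.add_mem hx hsx)
    have h2 : (imaginaryPart x : A) ∈ P := by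
      rw [imaginaryPart_apply_coe]
      have : ((2 : ℝ)⁻¹ • (x - star x) : A) = ((2 : ℂ)⁻¹) • (x - star x) := by
        rw [← Complex.coe_smul]; simp
      rw [this]
      exact P.smul_mem _ (P.smul_mem _ (P.sub_mem hx hsx))
    simp [g, hP _ h1, hP _ h2]
  · rw [hg _ (star_mul_self_nonneg c)]
    have := div_pos hcc hone
    exact_mod_cast this.ne'

lemma BS_exists_extreme {A : Type*} [CStarAlgebra A] [PartialOrder A] [StarOrderedRing A]
    (P : Submodule ℂ A) (hl : ∀ a : A, ∀ p ∈ P, a * p ∈ P) (hr : ∀ p ∈ P, ∀ a : A, p * a ∈ P)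
    (hcl : IsClosed (P : Set A)) (c : A) (hc : c ∉ P) :
    ∃ f ∈ Set.extremePoints ℝ {f : A → ℂ | BSState P f}, f (star c * c) ≠ 0 := by
  set S : Set (A → ℂ) := {f : A → ℂ | BSState P f} with hS
  have hSeq : S = (⋂ (x : A) (y : A), {f : A → ℂ | f (x + y) = f x + f y}) ∩
      (⋂ (z : ℂ) (x : A), {f : A → ℂ | f (z • x) = z * f x}) ∩
      (⋂ (x : A) (_ : 0 ≤ x), {f : A → ℂ | 0 ≤ f x}) ∩ {f : A → ℂ | f 1 = 1} ∩
      (⋂ (x : A) (_ : x ∈ P), {f : A → ℂ | f x = 0}) := by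
    ext f
    simp only [hS, Set.mem_ofPred_eq, Set.mem_inter_iff, Set.mem_iInter]
    exact ⟨fun h => ⟨⟨⟨⟨h.add, h.smul⟩, h.nonneg⟩, h.one⟩, h.vanish⟩,
      fun h => ⟨h.1.1.1.1, h.1.1.1.2, h.1.1.2, h.1.2, h.2⟩⟩
  have hclosed : IsClosed S := by
    rw [hSeq]
    refine IsClosed.inter (IsClosed.inter (IsClosed.inter (IsClosed.inter ?_ ?_) ?_) ?_) ?_
    · exact isClosed_iInter fun x => isClosed_iInter fun y => isClosed_eq (by fun_prop) (by fun_prop)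
    · exact isClosed_iInter fun x => isClosed_iInter fun y => isClosed_eq (by fun_prop) (by fun_prop)
    · exact isClosed_iInter fun x => isClosed_iInter fun y => isClosed_le (by fun_prop) (by fun_prop)
    · exact isClosed_eq (by fun_prop) (by fun_prop)
    · exact isClosed_iInter fun x => isClosed_iInter fun y => isClosed_eq (by fun_prop) (by fun_prop)
  have hcomp : IsCompact S := by
    refine IsCompact.of_isClosed_subset
      (isCompact_univ_pi (fun a : A => isCompact_closedBall (0 : ℂ) (2 * ‖a‖))) hclosed ?_
    intro f hf a _
    simpa using BSState.bound hf a
  have hconv : Convex ℝ S := by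
    intro f hf g hg s t hs ht hst
    refine ⟨fun x y => ?_, fun z x => ?_, fun x hx => ?_, ?_, fun x hx => ?_⟩
    · simp [hf.add, hg.add]; ring
    · simp [hf.smul, hg.smul]; ring
    · have h1 := hf.nonneg x hx
      have h2 := hg.nonneg x hx
      have h3 : (0:ℂ) ≤ s := by exact_mod_cast hs
      have h4 : (0:ℂ) ≤ t := by exact_mod_cast ht
      simp only [Pi.add_apply, Pi.smul_apply, Complex.real_smul]
      exact add_nonneg (mul_nonneg h3 h1) (mul_nonneg h4 h2)
    · simp [hf.one, hg.one]; exact_mod_cast hst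
    · simp [hf.vanish x hx, hg.vanish x hx]
  by_contra hcon
  push Not at hcon
  obtain ⟨f, hf, hfc⟩ := BS_exists_state P hl hr hcl c hc
  have hKM := closure_convexHull_extremePoints hcomp hconv
  apply hfc
  have hsub : closure (convexHull ℝ (S.extremePoints ℝ)) ⊆ {f : A → ℂ | f (star c * c) = 0} := by
    apply closure_minimal
    · apply convexHull_min hcon
      intro f hf g hg s t hs ht hst
      have hf' : f (star c * c) = 0 := hf
      have hg' : g (star c * c) = 0 := hg
      change (s • f + t • g) (star c * c) = 0
      simp [hf', hg']
    · exact isClosed_eq (by fun_prop) (by fun_prop)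
  rw [hKM] at hsub
  exact hsub hf

lemma BS_gns_irred {A : Type u} [CStarAlgebra A] [PartialOrder A] [StarOrderedRing A]
    (P : Submodule ℂ A) (f : A → ℂ) (hf : f ∈ Set.extremePoints ℝ {f : A → ℂ | BSState P f})
    (hl : ∀ a : A, ∀ p ∈ P, a * p ∈ P) (hr : ∀ p ∈ P, ∀ a : A, p * a ∈ P) :
    ∃ (H : Type u) (_ : NormedAddCommGroup H) (_ : InnerProductSpace ℂ H) (_ : CompleteSpace H)
      (π : A →⋆ₐ[ℂ] (H →L[ℂ] H)) (ξ : H), (∀ a, inner ℂ ξ (π a ξ) = f a) ∧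
      (∀ p ∈ P, π p = 0) ∧
      ∀ S : Submodule ℂ H, IsClosed (S : Set H) → (∀ y : A, ∀ v ∈ S, π y v ∈ S) → S = ⊥ ∨ S = ⊤ := by
  obtain ⟨hst, hext⟩ := hf
  have hst : BSState P f := hst
  set F := hst.toPLM with hF
  have hFf : ∀ a, F a = f a := fun a => rfl
  set π := F.gnsStarAlgHom with hπ
  let ξ : F.GNS := ((F.toPreGNS 1 : F.PreGNS) : F.GNS)
  have hπξ : ∀ a, π a ξ = ((F.toPreGNS a : F.PreGNS) : F.GNS) := by
    intro a
    change F.gnsNonUnitalStarAlgHom a _ = _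
    rw [PositiveLinearMap.gnsNonUnitalStarAlgHom_apply_coe]
    simp
  have hin : ∀ a b, inner ℂ (π a ξ) (π b ξ) = f (star a * b) := by
    intro a b
    rw [hπξ, hπξ, UniformSpace.Completion.inner_coe, PositiveLinearMap.preGNS_inner_def, hFf]
    simp
  have hdense : DenseRange (fun a => π a ξ) := by
    have h1 : DenseRange (fun x : F.PreGNS => (x : F.GNS)) := UniformSpace.Completion.denseRange_coe
    have : (fun a => π a ξ) = (fun x : F.PreGNS => (x : F.GNS)) ∘ F.toPreGNS := by
      funext a; exact hπξ a
    rw [this]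
    exact h1.comp F.toPreGNS.surjective.denseRange (UniformSpace.Completion.continuous_coe _)
  have hξ1 : π 1 ξ = ξ := by rw [map_one]; rfl
  have hadj : ∀ a (u v : F.GNS), inner ℂ (π a u) v = inner ℂ u (π (star a) v) := by
    intro a u v
    rw [map_star, ContinuousLinearMap.star_eq_adjoint, ContinuousLinearMap.adjoint_inner_right]
  -- cyclic
  have hcyc : ∀ S : Submodule ℂ F.GNS, IsClosed (S : Set F.GNS) → (∀ y : A, ∀ v ∈ S, π y v ∈ S) →
      ξ ∈ S → S = ⊤ := by
    intro S hS hinv hξ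
    rw [eq_top_iff]
    intro v _
    have : closure (Set.range (fun a => π a ξ)) ⊆ S := by
      apply closure_minimal _ hS
      rintro _ ⟨a, rfl⟩
      exact hinv a ξ hξ
    exact this (hdense v)
  refine ⟨F.GNS, inferInstance, inferInstance, inferInstance, π, ξ, ?_, ?_, ?_⟩
  · intro a
    have := hin 1 a
    rw [hξ1] at this
    rw [this]; simp
  · intro p hp
    ext v
    have h1 : Set.EqOn (fun v => π p v) (fun _ => (0 : F.GNS)) (Set.range (fun a => π a ξ)) := by
      rintro _ ⟨a, rfl⟩
      change π p (π a ξ) = 0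
      have : π p (π a ξ) = π (p * a) ξ := by rw [map_mul]; rfl
      rw [this, ← inner_self_eq_zero (𝕜 := ℂ), hin]
      exact hst.vanish _ (hl _ _ (hr _ hp _))
    have h2 := congrFun (Continuous.ext_on hdense (π p).continuous continuous_const h1) v
    simpa using h2
  · intro S hS hinv
    have : CompleteSpace S := hS.completeSpace_coe
    have hinv' : ∀ y : A, ∀ v ∈ Sᗮ, π y v ∈ Sᗮ := by
      intro y v hv
      rw [Submodule.mem_orthogonal] at hv ⊢
      intro u hu
      have h1 := hadj (star y) u v
      rw [star_star] at h1
      rw [← h1]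
      exact hv _ (hinv _ _ hu)
    obtain ⟨m, hm, m', hm', hsum⟩ := Submodule.exists_add_mem_mem_orthogonal (K := S) ξ
    by_cases hm0 : m = 0
    · left
      have : ξ ∈ Sᗮ := by rw [hsum, hm0, zero_add]; exact hm'
      have h2 := hcyc Sᗮ (Submodule.isClosed_orthogonal S) hinv' this
      rwa [Submodule.orthogonal_eq_top_iff] at h2
    right
    by_cases hm0' : m' = 0
    · exact hcyc S hS hinv (by rw [hsum, hm0', add_zero]; exact hm)
    exfalso
    have horth : ∀ u ∈ S, ∀ v ∈ Sᗮ, inner ℂ u v = 0 := fun u hu v hv =>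
      (Submodule.mem_orthogonal S v).1 hv u hu
    have horth' : ∀ u ∈ S, ∀ v ∈ Sᗮ, inner ℂ v u = 0 := fun u hu v hv =>
      (Submodule.mem_orthogonal' S v).1 hv u hu
    have hdec : ∀ a, f a = inner ℂ m (π a m) + inner ℂ m' (π a m') := by
      intro a
      have h1 := hin 1 a
      rw [hξ1, star_one, one_mul] at h1
      rw [← h1, hsum, map_add, inner_add_left, inner_add_right, inner_add_right,
        horth m hm _ (hinv' a m' hm'), horth' _ (hinv a m hm) m' hm']
      ring
    set t : ℝ := ‖m‖ ^ 2 with ht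
    set t' : ℝ := ‖m'‖ ^ 2 with ht'
    have htp : 0 < t := by rw [ht]; have := norm_pos_iff.2 hm0; positivity
    have htp' : 0 < t' := by rw [ht']; have := norm_pos_iff.2 hm0'; positivity
    have hnm : ∀ v : F.GNS, inner ℂ v (π 1 v) = ((‖v‖ ^ 2 : ℝ) : ℂ) := by
      intro v
      rw [map_one, one_apply_eq_self, inner_self_eq_norm_sq_to_K]
      simp
    have htt : t + t' = 1 := by
      have h1 := hdec 1
      rw [hst.one, hnm, hnm] at h1
      exact_mod_cast h1.symm
    have hstate : ∀ v : F.GNS, v ≠ 0 → (∀ p ∈ P, inner ℂ v (π p v) = 0) →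
        BSState P (fun a => ((‖v‖ ^ 2 : ℝ) : ℂ)⁻¹ * inner ℂ v (π a v)) := by
      intro v hv hvan
      have hv2 : 0 < ‖v‖ ^ 2 := by have := norm_pos_iff.2 hv; positivity
      refine ⟨?_, ?_, ?_, ?_, ?_⟩
      · intro x y
        simp only [map_add, add_apply, inner_add_right]
        ring
      · intro z x
        simp only [map_smul, smul_apply, inner_smul_right]
        ring
      · intro x hx
        apply mul_nonneg
        · rw [← Complex.ofReal_inv]
          exact_mod_cast inv_nonneg.2 hv2.le
        · obtain ⟨y, rfl⟩ := CStarAlgebra.nonneg_iff_eq_star_mul_self.1 hx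
          have : π (star y * y) v = π (star y) (π y v) := by rw [map_mul]; rfl
          rw [this, ← hadj, inner_self_eq_norm_sq_to_K]
          have h : (0 : ℂ) ≤ ((‖π y v‖ ^ 2 : ℝ) : ℂ) := by exact_mod_cast sq_nonneg ‖π y v‖
          simpa using h
      · rw [hnm]
        apply inv_mul_cancel₀
        exact_mod_cast hv2.ne'
      · intro p hp
        simp [hvan p hp]
    have hπP : ∀ p ∈ P, ∀ a, π p (π a ξ) = 0 := by
      intro p hp a
      have : π p (π a ξ) = π (p * a) ξ := by rw [map_mul]; rfl
      rw [this, ← inner_self_eq_zero (𝕜 := ℂ), hin]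
      exact hst.vanish _ (hl _ _ (hr _ hp _))
    have hπP0 : ∀ p ∈ P, π p = 0 := by
      intro p hp
      ext v
      have h1 : Set.EqOn (fun v => π p v) (fun _ => (0 : F.GNS)) (Set.range (fun a => π a ξ)) := by
        rintro _ ⟨a, rfl⟩
        exact hπP p hp a
      have h2 := congrFun (Continuous.ext_on hdense (π p).continuous continuous_const h1) v
      simpa using h2
    have s1 := hstate m hm0 (fun p hp => by simp [hπP0 p hp])
    have s2 := hstate m' hm0' (fun p hp => by simp [hπP0 p hp])
    have hseg : f ∈ openSegment ℝ (fun a => ((‖m‖ ^ 2 : ℝ) : ℂ)⁻¹ * inner ℂ m (π a m))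
        (fun a => ((‖m'‖ ^ 2 : ℝ) : ℂ)⁻¹ * inner ℂ m' (π a m')) := by
      refine ⟨t, t', htp, htp', htt, ?_⟩
      funext a
      rw [hdec a]
      simp only [Pi.add_apply, Pi.smul_apply, Complex.real_smul]
      rw [← ht, ← ht', mul_inv_cancel_left₀, mul_inv_cancel_left₀]
      · exact_mod_cast htp'.ne'
      · exact_mod_cast htp.ne'
    have heq := hext s1 s2 hseg
    have h3 : ∀ a, inner ℂ (m - (t : ℂ) • ξ) (π a ξ) = 0 := by
      intro a
      have h1 := congrFun heq a
      simp only [← ht] at h1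
      have h2 := hin 1 a
      rw [hξ1, star_one, one_mul] at h2
      have h4 : inner ℂ m (π a ξ) = inner ℂ m (π a m) := by
        rw [hsum, map_add, inner_add_right, horth m hm _ (hinv' a m' hm'), add_zero]
      rw [inner_sub_left, inner_smul_left, h2, h4, ← h1, Complex.conj_ofReal, mul_inv_cancel_left₀, sub_self]
      exact_mod_cast htp.ne'
    have h5 : m - (t : ℂ) • ξ = 0 := by
      have : Set.EqOn (fun v => inner ℂ (m - (t : ℂ) • ξ) v) (fun _ => (0 : ℂ)) (Set.range (fun a => π a ξ)) := by
        rintro _ ⟨a, rfl⟩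
        exact h3 a
      have h2 := congrFun (Continuous.ext_on hdense (by fun_prop) continuous_const this) (m - (t : ℂ) • ξ)
      exact inner_self_eq_zero.1 h2
    have h6 : ξ ∈ S := by
      have : ξ = (t : ℂ)⁻¹ • m := by
        rw [sub_eq_zero.1 h5, inv_smul_smul₀]
        exact_mod_cast htp.ne'
      rw [this]
      exact S.smul_mem _ hm
    have h7 : m' ∈ S := by
      have : m' = ξ - m := by rw [hsum]; abel
      rw [this]; exact S.sub_mem h6 hm
    exact hm0' (inner_self_eq_zero.1 (horth m' h7 m' hm'))

lemma BS_exists_irrep {A : Type u} [NonUnitalCStarAlgebra A]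
    (P : Submodule ℂ A) (hl : ∀ a : A, ∀ p ∈ P, a * p ∈ P) (hr : ∀ p ∈ P, ∀ a : A, p * a ∈ P)
    (hcl : IsClosed (P : Set A)) :
    (∀ p : A, star p * p ∈ P → p ∈ P) ∧ ∀ c, c ∉ P →
    ∃ ρ : IrreducibleRepOn A, (∀ p ∈ P, ρ.π p = 0) ∧ ρ.π c ≠ 0 := by
  let : PartialOrder (Unitization ℂ A) := CStarAlgebra.spectralOrder _
  have : StarOrderedRing (Unitization ℂ A) := CStarAlgebra.spectralOrderedRing _
  let P1 : Submodule ℂ (Unitization ℂ A) := P.map (Unitization.inrHom ℂ ℂ A)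
  have hmem : ∀ x : A, (x : Unitization ℂ A) ∈ P1 ↔ x ∈ P := by
    intro x
    constructor
    · rintro ⟨y, hy, hxy⟩
      have : y = x := Unitization.inr_injective hxy
      exact this ▸ hy
    · intro hx; exact ⟨x, hx, rfl⟩
  have hl1 : ∀ a : Unitization ℂ A, ∀ p ∈ P1, a * p ∈ P1 := by
    rintro a _ ⟨p, hp, rfl⟩
    refine ⟨a.fst • p + a.snd * p, P.add_mem (P.smul_mem _ hp) (hl _ _ hp), ?_⟩
    ext <;> simp
  have hr1 : ∀ p ∈ P1, ∀ a : Unitization ℂ A, p * a ∈ P1 := by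
    rintro _ ⟨p, hp, rfl⟩ a
    refine ⟨a.fst • p + p * a.snd, P.add_mem (P.smul_mem _ hp) (hr _ hp _), ?_⟩
    ext <;> simp
  have hcl1 : IsClosed (P1 : Set (Unitization ℂ A)) := by
    have : Topology.IsClosedEmbedding (fun x : A => (x : Unitization ℂ A)) :=
      (Unitization.isometry_inr (𝕜 := ℂ) (A := A)).isClosedEmbedding
    exact this.isClosedMap _ hcl
  refine ⟨fun p hp => ?_, fun c hc => ?_⟩
  · rw [← hmem]
    apply BS_mem_of_star_mul_self P1 hl1 hr1 hcl1
    rw [← Unitization.inr_star, ← Unitization.inr_mul, hmem]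
    exact hp
  · obtain ⟨f, hf, hfc⟩ := BS_exists_extreme P1 hl1 hr1 hcl1 (c : Unitization ℂ A) (by rwa [hmem])
    obtain ⟨H, i1, i2, i3, π, ξ, h1, h2, h3⟩ := BS_gns_irred P1 f hf hl1 hr1
    have hc0 : π (c : Unitization ℂ A) ≠ 0 := by
      intro h0
      apply hfc
      rw [← h1, map_mul, h0, mul_zero]
      simp
    let ρ : A →⋆ₙₐ[ℂ] (H →L[ℂ] H) :=
      (π : Unitization ℂ A →⋆ₙₐ[ℂ] (H →L[ℂ] H)).comp (Unitization.inrNonUnitalStarAlgHom ℂ A)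
    have hρ : ∀ a, ρ a = π (a : Unitization ℂ A) := fun a => rfl
    refine ⟨{ H := H, π := ρ, continuous := ?_, nonzero := ⟨c, hc0⟩, irreducible := ?_ }, ?_, hc0⟩
    · exact AddMonoidHomClass.continuous_of_bound ρ 1
        (fun a => by rw [one_mul]; exact NonUnitalStarAlgHom.norm_apply_le ρ a)
    · intro S hS hinv
      apply h3 S hS
      intro y v hv
      induction y using Unitization.ind with
      | inl_add_inr r a =>
        rw [map_add]
        have : (π (Unitization.inl r) + π (a : Unitization ℂ A)) v = r • v + ρ a v := by
          rw [add_apply, hρ]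
          congr 1
          have : (Unitization.inl r : Unitization ℂ A) = algebraMap ℂ _ r := rfl
          rw [this, AlgHomClass.commutes]
          simp [Algebra.algebraMap_eq_smul_one]
        rw [this]
        exact S.add_mem (S.smul_mem _ hv) (hinv _ _ hv)
    · intro p hp
      exact h2 _ ((hmem p).2 hp)

lemma BS_cut {A : Type*} [NonUnitalCStarAlgebra A] [PartialOrder A] [StarOrderedRing A]
    (P : Set A) (hcl : IsClosed P) (k : A) (hk : 0 ≤ k) (hkP : k ∉ P) :
    ∃ q r : A, IsSelfAdjoint (q * k) ∧ IsSelfAdjoint (r * k) ∧ (r * k) * (q * k) = q * k ∧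
      q * k ∉ P := by
  have hsa : IsSelfAdjoint k := .of_nonneg hk
  obtain ⟨δ, hδ, hball⟩ := Metric.isOpen_iff.1 hcl.isOpen_compl k hkP
  set ε := δ / 3 with hε
  have hε0 : 0 < ε := by positivity
  have hq0 : ∀ t ∈ quasispectrum ℝ k, 0 ≤ t := fun t ht => quasispectrum_nonneg_of_nonneg k hk t ht
  let q : ℝ → ℝ := fun t => max (t - 2 * ε) 0 / max t ε
  let r : ℝ → ℝ := fun t => min (max (t - ε) 0 / ε) 1 / max t ε
  have hmax : ∀ t : ℝ, max t ε ≠ 0 := fun t => (lt_of_lt_of_le hε0 (le_max_right t ε)).ne'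
  have hqc : Continuous q := by
    apply Continuous.div (by fun_prop) (by fun_prop) hmax
  have hrc : Continuous r := by
    apply Continuous.div (by fun_prop) (by fun_prop) hmax
  have hqz : q 0 = 0 := by
    simp only [q]; rw [max_eq_right (by linarith)]; simp
  have hrz : r 0 = 0 := by
    simp only [r]; rw [max_eq_right (by linarith : (0:ℝ) - ε ≤ 0)]; simp
  have hidn : cfcₙ (fun t : ℝ => t) k = k := cfcₙ_id' ℝ k hsa
  have e1 : cfcₙ q k * k = cfcₙ (fun t => q t * t) k := by
    rw [cfcₙ_mul q (fun t => t) k hqc.continuousOn hqz (by fun_prop) rfl, hidn]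
  have e2 : cfcₙ r k * k = cfcₙ (fun t => r t * t) k := by
    rw [cfcₙ_mul r (fun t => t) k hrc.continuousOn hrz (by fun_prop) rfl, hidn]
  refine ⟨cfcₙ q k, cfcₙ r k, ?_, ?_, ?_, ?_⟩
  · rw [e1]; exact cfcₙ_predicate _ _
  · rw [e2]; exact cfcₙ_predicate _ _
  · rw [e1, e2, ← cfcₙ_mul _ _ k (by fun_prop) (by simp) (by fun_prop) (by simp)]
    apply cfcₙ_congr
    intro t ht
    have h0 := hq0 t ht
    simp only
    rcases le_total t (2 * ε) with h | h
    · have : q t = 0 := by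
        simp only [q]; rw [max_eq_right (by linarith)]; simp
      rw [this]; ring
    · have : r t * t = 1 := by
        simp only [r]
        have h1 : 1 ≤ max (t - ε) 0 / ε := by
          rw [le_div_iff₀ hε0]
          exact le_trans (by linarith) (le_max_left _ _)
        rw [min_eq_right h1, max_eq_left (by linarith)]
        have : t ≠ 0 := by linarith
        field_simp
      rw [this, one_mul]
  · rw [e1]
    apply hball
    rw [Metric.mem_ball, dist_eq_norm]
    have : cfcₙ (fun t => q t * t) k - k = cfcₙ (fun t => q t * t - t) k := by
      rw [cfcₙ_sub _ _ k (by fun_prop) (by simp) (by fun_prop) rfl, hidn]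
    rw [this]
    have : ‖cfcₙ (fun t => q t * t - t) k‖ ≤ 2 * ε := by
      apply norm_cfcₙ_le
      intro t ht
      have h0 := hq0 t ht
      rcases le_total t (2 * ε) with h | h
      · have : q t = 0 := by
          simp only [q]; rw [max_eq_right (by linarith)]; simp
        rw [this, Real.norm_eq_abs, abs_le]
        constructor <;> linarith
      · have : q t * t = t - 2 * ε := by
          simp only [q]
          rw [max_eq_left (by linarith), max_eq_left (by linarith)]
          have : t ≠ 0 := by linarith
          field_simp
        rw [this, Real.norm_eq_abs, abs_le]
        constructor <;> linarith
    linarith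

/-- families of orthogonal self-adjoint elements outside `P`. -/
def BSFam {A : Type*} [NonUnitalCStarAlgebra A] (P : Submodule ℂ A) (N : ℕ) (h : Fin N → A) : Prop :=
  (∀ i, IsSelfAdjoint (h i)) ∧ (∀ i, h i ∉ P) ∧ ∀ i j, i ≠ j → h i * h j = 0

lemma BS_fam_prod {A : Type*} [NonUnitalCStarAlgebra A] (P : Submodule ℂ A)
    (hprime : ∀ a c : A, (∀ y, a * y * c ∈ P) → a ∈ P ∨ c ∈ P) (hne : ∃ a, a ∉ P)
    (N : ℕ) (h : Fin N → A) (hh : BSFam P N h) :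
    ∃ d, d ∉ P ∧ ∀ I : Submodule ℂ A, (∀ a : A, ∀ p ∈ I, a * p ∈ I) →
      (∀ p ∈ I, ∀ a : A, p * a ∈ I) → d ∉ I → ∀ i, h i ∉ I := by
  classical
  suffices H : ∀ s : Finset (Fin N), ∃ d, d ∉ P ∧ ∀ I : Submodule ℂ A, (∀ a : A, ∀ p ∈ I, a * p ∈ I) →
      (∀ p ∈ I, ∀ a : A, p * a ∈ I) → d ∉ I → ∀ i ∈ s, h i ∉ I by
    obtain ⟨d, h1, h2⟩ := H Finset.univ
    exact ⟨d, h1, fun I a b c i => h2 I a b c i (Finset.mem_univ i)⟩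
  intro s
  induction s using Finset.induction_on with
  | empty => obtain ⟨a, ha⟩ := hne; exact ⟨a, ha, by simp⟩
  | insert i s his ih =>
    obtain ⟨d, hd, hd2⟩ := ih
    have : ∃ y, d * y * h i ∉ P := by
      by_contra hcon
      push Not at hcon
      rcases hprime _ _ hcon with h1 | h1
      · exact hd h1
      · exact hh.2.1 i h1
    obtain ⟨y, hy⟩ := this
    refine ⟨d * y * h i, hy, fun I hl hr hI j hj => ?_⟩
    rcases Finset.mem_insert.1 hj with rfl | hj
    · exact fun hc => hI (hl _ _ hc)
    · exact hd2 I hl hr (fun hc => hI (hr _ (hr _ hc _) _)) j hj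

/-- the kernel of a representation. -/
def BSker {A : Type u} [NonUnitalCStarAlgebra A] (ρ : IrreducibleRepOn A) : Submodule ℂ A :=
  letI := ρ.normH
  letI := ρ.ipsH
  letI := ρ.csH
  LinearMap.ker (ρ.π : A →ₗ[ℂ] (ρ.H →L[ℂ] ρ.H))

lemma BS_mem_ker {A : Type u} [NonUnitalCStarAlgebra A] (ρ : IrreducibleRepOn A) (a : A) :
    a ∈ BSker ρ ↔ ρ.π a = 0 := Iff.rfl

lemma BS_fam_bound {A : Type u} [NonUnitalCStarAlgebra A] (ρ : IrreducibleRepOn A) (n N : ℕ)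
    (hn : letI := ρ.normH; letI := ρ.ipsH; FiniteDimensional ℂ ρ.H ∧ Module.finrank ℂ ρ.H ≤ n)
    (h : Fin N → A) (hsa : ∀ i, IsSelfAdjoint (h i)) (horth : ∀ i j, i ≠ j → h i * h j = 0)
    (hne : ∀ i, ρ.π (h i) ≠ 0) : N ≤ n := by
  letI := ρ.normH
  letI := ρ.ipsH
  letI := ρ.csH
  obtain ⟨hfd, hn⟩ := hn
  have : ∀ i, ∃ v, ρ.π (h i) v ≠ 0 := by
    intro i
    by_contra hcon
    push Not at hcon
    exact hne i (ContinuousLinearMap.ext hcon)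
  choose v hv using this
  have hli : LinearIndependent ℂ (fun i => ρ.π (h i) (v i)) := by
    apply linearIndependent_of_ne_zero_of_inner_eq_zero hv
    intro i j hij
    change inner ℂ (ρ.π (h i) (v i)) (ρ.π (h j) (v j)) = 0
    have h1 : ρ.π (h i) = ContinuousLinearMap.adjoint (ρ.π (h i)) := by
      rw [← ContinuousLinearMap.star_eq_adjoint, ← map_star, (hsa i).star_eq]
    rw [h1, ContinuousLinearMap.adjoint_inner_left]
    have h2 : ρ.π (h i) (ρ.π (h j) (v j)) = ρ.π (h i * h j) (v j) := by rw [map_mul]; rfl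
    rw [h2, horth i j hij, map_zero]
    simp
  have := hli.fintype_card_le_finrank
  simp at this
  omega

lemma BS_prime_irrep {A : Type u} [NonUnitalCStarAlgebra A] (hA : IsSubhomogeneous A)
    (P : Submodule ℂ A) (hl : ∀ a : A, ∀ p ∈ P, a * p ∈ P) (hr : ∀ p ∈ P, ∀ a : A, p * a ∈ P)
    (hcl : IsClosed (P : Set A))
    (hprime : ∀ a c : A, (∀ y, a * y * c ∈ P) → a ∈ P ∨ c ∈ P) (hne : ∃ a, a ∉ P) :
    ∃ ρ : IrreducibleRepOn A, ∀ a, ρ.π a = 0 ↔ a ∈ P := by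
  classical
  let _ : PartialOrder A := CStarAlgebra.spectralOrder _
  have _ : StarOrderedRing A := CStarAlgebra.spectralOrderedRing _
  obtain ⟨n, hn⟩ := hA
  obtain ⟨hstar, hirr⟩ := BS_exists_irrep P hl hr hcl
  have kl : ∀ ρ : IrreducibleRepOn A, ∀ a : A, ∀ p ∈ BSker ρ, a * p ∈ BSker ρ := by
    intro ρ a p hp
    rw [BS_mem_ker] at hp ⊢
    rw [map_mul, hp, mul_zero]
  have kr : ∀ ρ : IrreducibleRepOn A, ∀ p ∈ BSker ρ, ∀ a : A, p * a ∈ BSker ρ := by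
    intro ρ p hp a
    rw [BS_mem_ker] at hp ⊢
    rw [map_mul, hp, zero_mul]
  have key : ∀ N h, BSFam P N h → ∃ ρ : IrreducibleRepOn A, (∀ p ∈ P, ρ.π p = 0) ∧ ∀ i, ρ.π (h i) ≠ 0 := by
    intro N h hh
    obtain ⟨d, hd, hd2⟩ := BS_fam_prod P hprime hne N h hh
    obtain ⟨ρ, h1, h2⟩ := hirr d hd
    exact ⟨ρ, h1, hd2 (BSker ρ) (kl ρ) (kr ρ) h2⟩
  have hbound : ∀ N, (∃ h, BSFam P N h) → N ≤ n := by
    rintro N ⟨h, hh⟩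
    obtain ⟨ρ, h1, h2⟩ := key N h hh
    exact BS_fam_bound ρ n N (hn ρ) h hh.1 hh.2.2 h2
  have h1 : ∃ h, BSFam P 1 h := by
    obtain ⟨a, ha⟩ := hne
    refine ⟨fun _ => star a * a, fun _ => .star_mul_self a, fun _ hc => ha (hstar a hc), ?_⟩
    intro i j hij
    exact absurd (Subsingleton.elim i j) hij
  have hn1 := hbound 1 h1
  obtain ⟨N, hN, hmaxN⟩ : ∃ N, (∃ h, BSFam P (N + 1) h) ∧ ¬ ∃ h, BSFam P (N + 2) h := by
    by_contra hcon
    push Not at hcon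
    have : ∀ N, ∃ h, BSFam P (N + 1) h := by
      intro N
      induction N with
      | zero => exact h1
      | succ N ih => exact hcon N ih
    have := hbound _ (this n)
    omega
  obtain ⟨h, hh⟩ := hN
  obtain ⟨ρ, hρP, hρh⟩ := key _ h hh
  refine ⟨ρ, fun a => ⟨fun ha => ?_, hρP a⟩⟩
  by_contra haP
  obtain ⟨hsa, hhP, horth⟩ := hh
  obtain ⟨b, hb⟩ : ∃ b, a * b * h 0 ∉ P := by
    by_contra hcon
    push Not at hcon
    rcases hprime _ _ hcon with h1 | h1
    · exact haP h1
    · exact hhP 0 h1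
  set x := a * b * h 0 with hx
  set k := star x * x with hk
  have hkP : k ∉ P := fun hc => hb (hstar x hc)
  have hρk : ρ.π k = 0 := by
    have : ρ.π x = 0 := by rw [hx, map_mul, map_mul, ha, zero_mul, zero_mul]
    rw [hk, map_mul, this, mul_zero]
  obtain ⟨q, r, hqs, hrs, hrq, hqP⟩ := BS_cut (P : Set A) hcl k (star_mul_self_nonneg x) hkP
  set z := h 0 - h 0 * (r * k) with hz
  have hkh : ∀ j : Fin N, k * h j.succ = 0 := by
    intro j
    have : x * h j.succ = 0 := by
      rw [hx, mul_assoc, horth 0 j.succ (Fin.succ_ne_zero j).symm, mul_zero]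
    rw [hk, mul_assoc, this, mul_zero]
  have hzh : ∀ j : Fin N, z * h j.succ = 0 := by
    intro j
    rw [hz, sub_mul, horth 0 j.succ (Fin.succ_ne_zero j).symm, mul_assoc, mul_assoc, hkh j]
    simp
  have hzq : z * (q * k) = 0 := by
    rw [hz, sub_mul, mul_assoc, hrq, sub_self]
  have hzP : z ∉ P := by
    intro hc
    apply hρh 0
    have h2 := hρP z hc
    rw [hz, map_sub, map_mul, map_mul, hρk, mul_zero, mul_zero, sub_zero] at h2
    exact h2
  apply hmaxN
  have hflip : ∀ u v : A, IsSelfAdjoint u → IsSelfAdjoint v → u * v = 0 → v * u = 0 := by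
    intro u v hu hv huv
    have := congrArg star huv
    rwa [star_mul, hu.star_eq, hv.star_eq, star_zero] at this
  have hys : IsSelfAdjoint (star z * z) := .star_mul_self z
  have o1 : star z * z * (q * k) = 0 := by rw [mul_assoc, hzq, mul_zero]
  have o2 : ∀ j : Fin N, star z * z * h j.succ = 0 := fun j => by rw [mul_assoc, hzh, mul_zero]
  have o3 : ∀ j : Fin N, q * k * h j.succ = 0 := fun j => by rw [mul_assoc, hkh, mul_zero]
  refine ⟨Fin.cons (star z * z) (Fin.cons (q * k) (fun j : Fin N => h j.succ)), ?_, ?_, ?_⟩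
  · intro i
    refine Fin.cases ?_ (fun i => Fin.cases ?_ (fun i => ?_) i) i
    · simpa using hys
    · simpa using hqs
    · simpa using hsa _
  · intro i
    refine Fin.cases ?_ (fun i => Fin.cases ?_ (fun i => ?_) i) i
    · simpa using fun hc => hzP (hstar z hc)
    · simpa using hqP
    · simpa using hhP _
  · intro i j
    refine Fin.cases ?_ (fun i => Fin.cases ?_ (fun i => ?_) i) i <;>
    refine Fin.cases ?_ (fun j => Fin.cases ?_ (fun j => ?_) j) j
    · simp
    · intro _; simpa using o1
    · intro _; simpa using o2 j
    · intro _; simpa using hflip _ _ hys hqs o1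
    · simp
    · intro _; simpa using o3 j
    · intro _; simpa using hflip _ _ hys (hsa _) (o2 i)
    · intro _; simpa using hflip _ _ hqs (hsa _) (o3 i)
    · intro hij
      simp only [Fin.cons_succ]
      apply horth
      intro hc
      exact hij (by rw [hc])

lemma BS_burnside {H : Type*} [AddCommGroup H] [Module ℂ H] [FiniteDimensional ℂ H] [Nontrivial H]
    (S : Subalgebra ℂ (Module.End ℂ H))
    (hirr : ∀ W : Submodule ℂ H, (∀ s ∈ S, ∀ v ∈ W, s v ∈ W) → W = ⊥ ∨ W = ⊤)
    (T : Module.End ℂ H) : T ∈ S := by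
  classical
  have smul_def : ∀ (s : S) (v : H), s • v = (s : Module.End ℂ H) v := fun _ _ => rfl
  have : IsSimpleModule S H := by
    rw [isSimpleModule_iff]
    refine { toNontrivial := inferInstance, eq_bot_or_eq_top := fun W => ?_ }
    rcases hirr (W.restrictScalars ℂ) (fun s hs v hv => W.smul_mem (⟨s, hs⟩ : S) hv) with h | h
    · left; exact (Submodule.restrictScalars_eq_bot_iff ℂ S H).1 h
    · right; exact (Submodule.restrictScalars_eq_top_iff ℂ S H).1 h
  have schur : ∀ D : Module.End S H, ∃ c : ℂ, ∀ v, D v = c • v := by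
    intro D
    let D' : Module.End ℂ H := D.restrictScalars ℂ
    obtain ⟨c, hc⟩ := Module.End.exists_eigenvalue D'
    refine ⟨c, ?_⟩
    rcases hirr (Module.End.eigenspace D' c) (by
      intro s hs v hv
      rw [Module.End.mem_eigenspace_iff] at hv ⊢
      have h1 : D' (s v) = s (D' v) := D.map_smul (⟨s, hs⟩ : S) v
      rw [h1, hv, map_smul]) with h | h
    · exact absurd h hc
    · intro v
      have : v ∈ Module.End.eigenspace D' c := by rw [h]; trivial
      exact Module.End.mem_eigenspace_iff.1 this
  let f : Module.End (Module.End S H) H :=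
    { toFun := T
      map_add' := T.map_add
      map_smul' := by
        intro D v
        obtain ⟨c, hc⟩ := schur D
        change T (D v) = D (T v)
        rw [hc, hc, map_smul] }
  let b := Module.finBasis ℂ H
  obtain ⟨r, hr⟩ := jacobson_density f (Finset.univ.image b)
  have : T = (r : Module.End ℂ H) := by
    apply b.ext
    intro i
    exact hr (b i) (Finset.mem_image_of_mem _ (Finset.mem_univ i))
  rw [this]
  exact r.2

lemma BS_burnside' {H : Type*} [AddCommGroup H] [Module ℂ H] [FiniteDimensional ℂ H]
    (J : Submodule ℂ (Module.End ℂ H)) (hmul : ∀ s ∈ J, ∀ t ∈ J, s * t ∈ J)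
    (hne : ∃ s ∈ J, s ≠ 0)
    (hirr : ∀ W : Submodule ℂ H, (∀ s ∈ J, ∀ v ∈ W, s v ∈ W) → W = ⊥ ∨ W = ⊤)
    (T : Module.End ℂ H) : T ∈ J := by
  classical
  obtain ⟨j, hj, hj0⟩ := hne
  obtain ⟨v, hv⟩ : ∃ v, j v ≠ 0 := by
    by_contra hcon
    push Not at hcon
    exact hj0 (LinearMap.ext hcon)
  have : Nontrivial H := ⟨j v, 0, hv⟩
  let S : Subalgebra ℂ (Module.End ℂ H) :=
    { carrier := {T | ∃ c : ℂ, ∃ s ∈ J, T = c • 1 + s}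
      mul_mem' := by
        rintro _ _ ⟨c, s, hs, rfl⟩ ⟨d, t, ht, rfl⟩
        refine ⟨c * d, c • t + d • s + s * t, ?_, ?_⟩
        · exact J.add_mem (J.add_mem (J.smul_mem _ ht) (J.smul_mem _ hs)) (hmul _ hs _ ht)
        · simp only [add_mul, mul_add, smul_mul_assoc, mul_smul_comm, one_mul, mul_one, smul_smul,
            smul_add]
          rw [mul_comm d c]
          abel
      add_mem' := by
        rintro _ _ ⟨c, s, hs, rfl⟩ ⟨d, t, ht, rfl⟩
        exact ⟨c + d, s + t, J.add_mem hs ht, by rw [add_smul]; abel⟩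
      algebraMap_mem' := fun c => ⟨c, 0, J.zero_mem, by
        rw [add_zero]; exact Algebra.algebraMap_eq_smul_one c⟩ }
  have hS : ∀ T, ∃ c : ℂ, ∃ s ∈ J, T = c • 1 + s := fun T => BS_burnside S (by
    intro W hW
    apply hirr W
    intro s hs v hv
    exact hW s ⟨0, s, hs, by simp⟩ v hv) T
  have hl : ∀ T, ∀ s ∈ J, T * s ∈ J := by
    intro T s hs
    obtain ⟨c, t, ht, rfl⟩ := hS T
    rw [add_mul, smul_mul_assoc, one_mul]
    exact J.add_mem (J.smul_mem _ hs) (hmul _ ht _ hs)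
  have hr : ∀ T, ∀ s ∈ J, s * T ∈ J := by
    intro T s hs
    obtain ⟨c, t, ht, rfl⟩ := hS T
    rw [mul_add, mul_smul_comm, mul_one]
    exact J.add_mem (J.smul_mem _ hs) (hmul _ hs _ ht)
  obtain ⟨φ, hφ⟩ : ∃ φ : Module.Dual ℂ H, φ (j v) ≠ 0 := by
    by_contra hcon
    push Not at hcon
    exact hv ((Module.forall_dual_apply_eq_zero_iff ℂ _).1 hcon)
  let b := Module.finBasis ℂ H
  have hT : T = ∑ i, (φ.smulRight ((φ (j v))⁻¹ • T (b i))) * j * ((b.coord i).smulRight v) := by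
    apply b.ext
    intro k
    simp [Finsupp.single_apply, apply_ite j, apply_ite φ, ite_smul, smul_smul, hφ]
  rw [hT]
  exact J.sum_mem fun i _ => hr _ _ (hl _ _ hj)

/-- the data of a surjective `*`-representation onto matrices. -/
structure BSMat (A : Type u) [NonUnitalCStarAlgebra A] (P : Submodule ℂ A) (k : ℕ) where
  R : A →ₗ[ℂ] Matrix (Fin k) (Fin k) ℂ
  map_mul : ∀ a b, R (a * b) = R a * R b
  map_star : ∀ a, R (star a) = (R a).conjTranspose
  surj : Function.Surjective R
  bound : ∀ a i j, ‖R a i j‖ ≤ ‖a‖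
  ker : ∀ a, R a = 0 ↔ a ∈ P

lemma BS_exists_mat {A : Type u} [NonUnitalCStarAlgebra A] (P : Submodule ℂ A)
    (ρ : IrreducibleRepOn A) (hρ : ∀ a, ρ.π a = 0 ↔ a ∈ P)
    (hfd : letI := ρ.normH; letI := ρ.ipsH; FiniteDimensional ℂ ρ.H) :
    ∃ k, Nonempty (BSMat A P k) := by
  let _ := ρ.normH
  let _ := ρ.ipsH
  have _ := ρ.csH
  have _ : FiniteDimensional ℂ ρ.H := hfd
  let b := stdOrthonormalBasis ℂ ρ.H
  let L : A →ₗ[ℂ] Module.End ℂ ρ.H :=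
    (ContinuousLinearMap.coeLM ℂ).comp (ρ.π : A →ₗ[ℂ] (ρ.H →L[ℂ] ρ.H))
  have hL : ∀ a v, L a v = ρ.π a v := fun _ _ => rfl
  let E := LinearMap.toMatrixOrthonormal b
  have hentry : ∀ (T : Module.End ℂ ρ.H) i j, E T i j = inner ℂ (b i) (T (b j)) := by
    intro T i j
    exact LinearMap.toMatrixOrthonormal_apply_apply b T i j
  refine ⟨_, ⟨⟨
    { toFun := fun a => E (L a)
      map_add' := fun a c => by rw [map_add, map_add]
      map_smul' := fun r a => by rw [map_smul, map_smul, RingHom.id_apply] }, ?_, ?_, ?_, ?_, ?_⟩⟩⟩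
  · intro a c
    have : L (a * c) = L a * L c := by
      ext v
      rw [hL, map_mul]; rfl
    change E (L (a * c)) = E (L a) * E (L c)
    rw [this, map_mul]
  · intro a
    change E (L (star a)) = (E (L a)).conjTranspose
    ext i j
    rw [Matrix.conjTranspose_apply, hentry, hentry, hL, hL, map_star,
      ContinuousLinearMap.star_eq_adjoint, ContinuousLinearMap.adjoint_inner_right]
    exact (inner_conj_symm _ _).symm
  · intro m
    have := BS_burnside' (LinearMap.range L) (by
      rintro _ ⟨a, rfl⟩ _ ⟨c, rfl⟩
      refine ⟨a * c, ?_⟩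
      ext v
      rw [hL, map_mul]; rfl) (by
      obtain ⟨y, hy⟩ := ρ.nonzero
      refine ⟨L y, ⟨y, rfl⟩, fun h => hy ?_⟩
      ext v
      exact LinearMap.congr_fun h v) (by
      intro W hW
      exact ρ.irreducible W W.closed_of_finiteDimensional
        (fun y v hv => hW _ ⟨y, rfl⟩ v hv)) (E.symm m)
    obtain ⟨a, ha⟩ := this
    refine ⟨a, ?_⟩
    change E (L a) = m
    rw [ha]
    exact E.apply_symm_apply m
  · intro a i j
    change ‖E (L a) i j‖ ≤ ‖a‖
    rw [hentry, hL]
    calc _ ≤ ‖b i‖ * ‖ρ.π a (b j)‖ := norm_inner_le_norm _ _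
      _ ≤ ‖b i‖ * (‖ρ.π a‖ * ‖b j‖) := by gcongr; exact (ρ.π a).le_opNorm _
      _ = ‖ρ.π a‖ := by simp [b.orthonormal.1]
      _ ≤ ‖a‖ := NonUnitalStarAlgHom.norm_apply_le ρ.π a
  · intro a
    change E (L a) = 0 ↔ _
    rw [← hρ a, map_eq_zero_iff E E.injective]
    constructor
    · intro h; ext v; exact LinearMap.congr_fun h v
    · intro h; ext v; rw [hL, h]; rfl

lemma BS_neumann {X : Type*} [NonUnitalNormedRing X] [NormedSpace ℂ X] [CompleteSpace X]
    [IsScalarTower ℂ X X] [SMulCommClass ℂ X X] (w : X) (hw : ‖w‖ < 1) :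
    (∃ z, z - z * w = w) ∧ ∃ z, z - w * z = w := by
  constructor
  · let T : X →L[ℂ] X := (LinearMap.mulRight ℂ w).mkContinuous ‖w‖ (fun x => by
      rw [LinearMap.mulRight_apply, mul_comm ‖w‖]; exact norm_mul_le _ _)
    have hT : ‖T‖ < 1 := lt_of_le_of_lt (LinearMap.mkContinuous_norm_le _ (norm_nonneg _) _) hw
    let U := Units.oneSub T hT
    refine ⟨(↑U⁻¹ : X →L[ℂ] X) w, ?_⟩
    have h : (U : X →L[ℂ] X) ((↑U⁻¹ : X →L[ℂ] X) w) = w := by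
      change ((U : X →L[ℂ] X) * (↑U⁻¹ : X →L[ℂ] X)) w = w
      rw [Units.mul_inv]; rfl
    exact h
  · let T : X →L[ℂ] X := (LinearMap.mulLeft ℂ w).mkContinuous ‖w‖ (fun x => by
      rw [LinearMap.mulLeft_apply]; exact norm_mul_le _ _)
    have hT : ‖T‖ < 1 := lt_of_le_of_lt (LinearMap.mkContinuous_norm_le _ (norm_nonneg _) _) hw
    let U := Units.oneSub T hT
    refine ⟨(↑U⁻¹ : X →L[ℂ] X) w, ?_⟩
    have h : (U : X →L[ℂ] X) ((↑U⁻¹ : X →L[ℂ] X) w) = w := by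
      change ((U : X →L[ℂ] X) * (↑U⁻¹ : X →L[ℂ] X)) w = w
      rw [Units.mul_inv]; rfl
    exact h

lemma BS_quasi {X : Type*} [NonUnitalRing X] (g z z' : X) (h : z - z * g = g)
    (h' : z' - g * z' = g) : IsQuasiregular (-g) := by
  have e1 : z * z' - z * g * z' = z - g := by
    have : z * (z' - g * z') = z * g := by rw [h']
    rw [mul_sub, ← mul_assoc] at this
    rw [this]
    exact by nth_rewrite 2 [← h]; abel
  have e2 : z * z' - z * g * z' = z' - g := by
    have : (z - z * g) * z' = g * z' := by rw [h]
    rw [sub_mul] at this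
    rw [this]
    exact by nth_rewrite 2 [← h']; abel
  have e : z = z' := by
    have := e1.symm.trans e2
    exact sub_left_injective this
  subst e
  rw [isQuasiregular_iff]
  refine ⟨z, ?_, ?_⟩
  · rw [neg_mul]
    have : z + -g + -(g * z) = z - g * z - g := by abel
    rw [this, h', sub_self]
  · rw [mul_neg]
    have : -g + z + -(z * g) = z - z * g - g := by abel
    rw [this, h, sub_self]

lemma BS_not_quasi {C : Type*} [NonUnitalCStarAlgebra C] [PartialOrder C] [StarOrderedRing C]
    (h : C) (h0 : 0 ≤ h) (h1 : ‖h‖ = 1) : ¬ IsQuasiregular (-h) := by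
  intro hq
  have h2 : ‖(h : Unitization ℂ C)‖ ∈ spectrum ℝ (h : Unitization ℂ C) := by
    apply CStarAlgebra.norm_mem_spectrum_of_nonneg
    rwa [Unitization.inr_nonneg_iff]
  rw [← Unitization.quasispectrum_eq_spectrum_inr' ℝ ℂ, Unitization.norm_inr, h1] at h2
  apply h2 isUnit_one
  convert hq
  have : (isUnit_one : IsUnit (1 : ℝ)).unit = 1 := by ext; rfl
  rw [this, inv_one, one_smul]

lemma BS_pos_quasi {C : Type*} [NonUnitalCStarAlgebra C] [PartialOrder C] [StarOrderedRing C]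
    (m : C) (c : ℂ) (hc0 : c ≠ 0) (hc : ¬ (c.im = 0 ∧ 0 ≤ c.re)) :
    ∃ z : C, z - z * (c⁻¹ • (star m * m)) = c⁻¹ • (star m * m) := by
  have hn : c ∉ quasispectrum ℂ (star m * m) := by
    intro hmem
    have hr := (IsSelfAdjoint.star_mul_self m).quasispectrumRestricts
    rw [← hr.algebraMap_image] at hmem
    obtain ⟨t, ht, rfl⟩ := hmem
    apply hc
    have := quasispectrum_nonneg_of_nonneg _ (star_mul_self_nonneg m) t ht
    simpa using this
  have hq : IsQuasiregular (-(c⁻¹ • (star m * m))) := by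
    by_contra hcon
    apply hn
    have := quasispectrum.mem_of_not_quasiregular (star m * m) (r := Units.mk0 c hc0) hcon
    exact this
  obtain ⟨y, -, hy⟩ := isQuasiregular_iff.1 hq
  refine ⟨y, ?_⟩
  rw [mul_neg] at hy
  rw [← sub_eq_zero, ← hy]
  abel

lemma BS_rep_sum {A B : Type u} [NonUnitalNormedRing A] [NormedSpace ℂ A]
    [NonUnitalNormedRing B] [NormedSpace ℂ B] (u : A ⊗[ℂ] B) :
    ∃ (n : ℕ) (a : Fin n → A) (b : Fin n → B), u = ∑ i, a i ⊗ₜ[ℂ] b i := by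
  induction u using TensorProduct.induction_on with
  | zero => exact ⟨0, Fin.elim0, Fin.elim0, by simp⟩
  | tmul a b => exact ⟨1, fun _ => a, fun _ => b, by simp⟩
  | add x y hx hy =>
    obtain ⟨n, a, b, rfl⟩ := hx
    obtain ⟨m, c, d, rfl⟩ := hy
    refine ⟨n + m, Fin.append a c, Fin.append b d, ?_⟩
    rw [Fin.sum_univ_add]
    simp

lemma BS_tmul_norm {A B : Type u} [NonUnitalNormedRing A] [NormedSpace ℂ A]
    [NonUnitalNormedRing B] [NormedSpace ℂ B] (a : A) (b : B) :
    bsProjNorm (a ⊗ₜ[ℂ] b) ≤ ‖a‖ * ‖b‖ := by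
  apply csInf_le
  · refine ⟨0, ?_⟩
    rintro r ⟨n, a, b, -, rfl⟩
    positivity
  · exact ⟨1, fun _ => a, fun _ => b, by simp, by simp⟩

lemma BS_norm_le {A B : Type u} [NonUnitalNormedRing A] [NormedSpace ℂ A]
    [NonUnitalNormedRing B] [NormedSpace ℂ B] (f : A ⊗[ℂ] B →ₗ[ℂ] B)
    (hf : ∀ a b, ‖f (a ⊗ₜ[ℂ] b)‖ ≤ ‖a‖ * ‖b‖) (u : A ⊗[ℂ] B) : ‖f u‖ ≤ bsProjNorm u := by
  apply le_csInf
  · obtain ⟨n, a, b, h⟩ := BS_rep_sum u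
    exact ⟨_, n, a, b, h, rfl⟩
  · rintro r ⟨n, a, b, rfl, rfl⟩
    rw [map_sum]
    exact (norm_sum_le _ _).trans (Finset.sum_le_sum fun i _ => hf _ _)

/-- The subspace spanned by `p ⊗ b` with `p ∈ P`. -/
def BSspan {A B X : Type u} [NonUnitalCStarAlgebra A] [NonUnitalCStarAlgebra B]
    [NonUnitalNormedRing X] [NormedSpace ℂ X] (ι : A ⊗[ℂ] B →ₗ[ℂ] X) (P : Submodule ℂ A) :
    Submodule ℂ X := Submodule.span ℂ {x | ∃ p ∈ P, ∃ b : B, x = ι (p ⊗ₜ[ℂ] b)}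

/-- The extended homomorphism to matrices. -/
structure BSRep {A B X : Type u} [NonUnitalCStarAlgebra A] [NonUnitalCStarAlgebra B]
    [NonUnitalNormedRing X] [NormedSpace ℂ X] (ι : A ⊗[ℂ] B →ₗ[ℂ] X) (P : Submodule ℂ A)
    (k : ℕ) where
  Φ : X →ₗ[ℂ] CStarMatrix (Fin k) (Fin k) B
  Θ : CStarMatrix (Fin k) (Fin k) B → A ⊗[ℂ] B
  map_mul : ∀ x y, Φ (x * y) = Φ x * Φ y
  right_inv : ∀ m, Φ (ι (Θ m)) = m
  ker : ∀ x, Φ x = 0 → x ∈ closure (BSspan ι P : Set X)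
  span : ∀ v ∈ BSspan ι P, v ∈ Set.range ι ∧ Φ v = 0

lemma BS_exists_rep {A B X : Type u} [NonUnitalCStarAlgebra A] [NonUnitalCStarAlgebra B]
    [NonUnitalNormedRing X] [StarRing X] [NormedSpace ℂ X] [CompleteSpace X]
    [IsScalarTower ℂ X X] [SMulCommClass ℂ X X]
    (ι : A ⊗[ℂ] B →ₗ[ℂ] X) (hX : IsTensorCompletion bsProjNorm X ι)
    (P : Submodule ℂ A) (k : ℕ) (M : BSMat A P k) :
    ∃ S : BSRep ι P k, ∀ u, S.Φ (star (ι u)) = star (S.Φ (ι u)) := by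
  classical
  let f : Fin k → Fin k → A ⊗[ℂ] B →ₗ[ℂ] B := fun i j =>
    TensorProduct.lift (LinearMap.mk₂ ℂ (fun a b => M.R a i j • b)
      (fun a c b => by rw [map_add, Matrix.add_apply, add_smul])
      (fun r a b => by rw [map_smul, Matrix.smul_apply, smul_assoc])
      (fun a b d => smul_add _ _ _)
      (fun r a b => smul_comm _ _ _))
  have hf : ∀ i j a b, f i j (a ⊗ₜ[ℂ] b) = M.R a i j • b := fun i j a b => by
    simp [f]
  have hbd : ∀ i j u, ‖f i j u‖ ≤ 1 * ‖ι u‖ := by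
    intro i j u
    rw [hX.norm_eq, one_mul]
    refine BS_norm_le _ (fun a b => ?_) u
    rw [hf, norm_smul]
    exact mul_le_mul_of_nonneg_right (M.bound a i j) (norm_nonneg _)
  let φ : Fin k → Fin k → X →L[ℂ] B := fun i j => (f i j).extendOfNorm ι
  have hφι : ∀ i j u, φ i j (ι u) = f i j u := fun i j u =>
    LinearMap.extendOfNorm_eq hX.dense ⟨1, hbd i j⟩ u
  have hφ : ∀ i j a b, φ i j (ι (a ⊗ₜ[ℂ] b)) = M.R a i j • b := fun i j a b => by
    rw [hφι, hf]
  have hmul : ∀ x y i j, φ i j (x * y) = ∑ l, φ i l x * φ l j y := by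
    intro x y i j
    refine hX.dense.induction_on₂ (p := fun x y => φ i j (x * y) = ∑ l, φ i l x * φ l j y)
      (isClosed_eq (by fun_prop) (by fun_prop)) (fun u v => ?_) x y
    induction u using TensorProduct.induction_on with
    | zero => simp
    | add u₁ u₂ h1 h2 =>
      simp only [map_add, add_mul, Finset.sum_add_distrib, h1, h2]
    | tmul a b =>
      induction v using TensorProduct.induction_on with
      | zero => simp
      | add u₁ u₂ h1 h2 =>
        simp only [map_add, mul_add, Finset.sum_add_distrib, h1, h2]
      | tmul c d =>
        rw [hX.mul_tmul, hφ, M.map_mul, Matrix.mul_apply, Finset.sum_smul]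
        refine Finset.sum_congr rfl fun l _ => ?_
        rw [hφ, hφ, smul_mul_smul_comm]
  choose e he using fun i j => M.surj (Matrix.single i j 1)
  let T : Fin k → Fin k → B →L[ℂ] X := fun i j =>
    (ι.comp (TensorProduct.mk ℂ A B (e i j))).mkContinuous ‖e i j‖ (fun b => by
      change ‖ι (e i j ⊗ₜ[ℂ] b)‖ ≤ _
      rw [hX.norm_eq]
      exact BS_tmul_norm _ _)
  have hT : ∀ i j b, T i j b = ι (e i j ⊗ₜ[ℂ] b) := fun _ _ _ => rfl
  let Q : X →L[ℂ] X := ∑ i, ∑ j, (T i j).comp (φ i j)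
  have hQ : ∀ x, Q x = ∑ i, ∑ j, ι (e i j ⊗ₜ[ℂ] φ i j x) := by
    intro x
    simp [Q, ContinuousLinearMap.sum_apply, hT]
  let Φ : X →ₗ[ℂ] CStarMatrix (Fin k) (Fin k) B :=
    { toFun := fun x => CStarMatrix.ofMatrix (Matrix.of fun i j => φ i j x)
      map_add' := fun x y => by ext i j; simp
      map_smul' := fun r x => by ext i j; simp }
  have hΦ : ∀ x i j, Φ x i j = φ i j x := fun _ _ _ => rfl
  have hspan : ∀ v ∈ BSspan ι P, v ∈ Set.range ι ∧ Φ v = 0 := by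
    intro v hv
    induction hv using Submodule.span_induction with
    | mem v hv =>
      obtain ⟨p, hp, b, rfl⟩ := hv
      refine ⟨⟨_, rfl⟩, ?_⟩
      ext i j
      rw [hΦ, hφ, (M.ker p).2 hp]
      simp
    | zero => exact ⟨⟨0, map_zero ι⟩, map_zero Φ⟩
    | add v w _ _ h1 h2 =>
      obtain ⟨⟨a, rfl⟩, ha⟩ := h1
      obtain ⟨⟨c, rfl⟩, hc⟩ := h2
      exact ⟨⟨a + c, map_add ι _ _⟩, by rw [map_add, ha, hc, add_zero]⟩
    | smul r v _ h =>
      obtain ⟨⟨a, rfl⟩, ha⟩ := h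
      exact ⟨⟨r • a, map_smul ι _ _⟩, by rw [map_smul, ha, smul_zero]⟩
  have hclos : ∀ x, x - Q x ∈ closure (BSspan ι P : Set X) := by
    intro x
    refine hX.dense.induction_on x (isClosed_closure.preimage (by fun_prop : Continuous fun x => x - Q x)) ?_
    intro u
    apply subset_closure
    change ι u - Q (ι u) ∈ BSspan ι P
    induction u using TensorProduct.induction_on with
    | zero => simp
    | add u v h1 h2 =>
      rw [map_add, map_add, add_sub_add_comm]
      exact Submodule.add_mem _ h1 h2
    | tmul a b =>
      apply Submodule.subset_span
      refine ⟨a - ∑ i, ∑ j, M.R a i j • e i j, ?_, b, ?_⟩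
      · rw [← M.ker]
        rw [map_sub, map_sum]
        simp only [map_sum, map_smul, he]
        rw [sub_eq_zero]
        ext i j
        simp [Matrix.sum_apply, Matrix.single_apply, Finset.sum_ite_eq, ite_and]
      · rw [hQ, TensorProduct.sub_tmul, map_sub]
        congr 1
        rw [TensorProduct.sum_tmul, map_sum]
        refine Finset.sum_congr rfl fun i _ => ?_
        rw [TensorProduct.sum_tmul, map_sum]
        refine Finset.sum_congr rfl fun j _ => ?_
        rw [hφ, TensorProduct.smul_tmul]
  refine ⟨⟨Φ, fun m => ∑ i, ∑ j, e i j ⊗ₜ[ℂ] m i j, ?_, ?_, ?_, hspan⟩, ?_⟩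
  · intro x y
    ext i j
    rw [hΦ, hmul, CStarMatrix.mul_apply]
    rfl
  · intro m
    ext i j
    rw [hΦ]
    simp only [map_sum, hφ, he]
    simp [Matrix.single_apply, ite_and]
  · intro x hx
    have : Q x = 0 := by
      rw [hQ]
      refine Finset.sum_eq_zero fun i _ => Finset.sum_eq_zero fun j _ => ?_
      have : φ i j x = 0 := by rw [← hΦ, hx]; rfl
      rw [this, TensorProduct.tmul_zero, map_zero]
    have h := hclos x
    rwa [this, sub_zero] at h
  · intro u
    change Φ (star (ι u)) = star (Φ (ι u))
    induction u using TensorProduct.induction_on with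
    | zero => simp
    | add u v h1 h2 => simp only [map_add, star_add, h1, h2]
    | tmul a b =>
      ext i j
      rw [hX.star_tmul, CStarMatrix.star_apply, hΦ, hΦ, hφ, hφ, M.map_star,
        Matrix.conjTranspose_apply, star_smul]

lemma BS_rep_star {A B X : Type u} [NonUnitalCStarAlgebra A] [NonUnitalCStarAlgebra B]
    [NonUnitalNormedRing X] [StarRing X] [NormedSpace ℂ X] [CompleteSpace X]
    [IsScalarTower ℂ X X] [SMulCommClass ℂ X X]
    (ι : A ⊗[ℂ] B →ₗ[ℂ] X)
    (P : Submodule ℂ A) (k : ℕ) (S : BSRep ι P k)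
    (hS : ∀ u, S.Φ (star (ι u)) = star (S.Φ (ι u))) (x : X) : S.Φ (star x) = star (S.Φ x) := by
  classical
  let _ : PartialOrder B := CStarAlgebra.spectralOrder _
  have _ : StarOrderedRing B := CStarAlgebra.spectralOrderedRing _
  let ψ : X →ₙ+* CStarMatrix (Fin k) (Fin k) B :=
    { toFun := fun x => star (S.Φ (star x))
      map_mul' := fun x y => by rw [star_mul, S.map_mul, star_mul]
      map_zero' := by simp
      map_add' := fun x y => by simp }
  have hψ : ∀ x, ψ x = star (S.Φ (star x)) := fun _ => rfl
  have hψι : ∀ u, ψ (ι u) = S.Φ (ι u) := fun u => by rw [hψ, hS, star_star]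
  have key : ∀ t, S.Φ t = 0 → ψ t = 0 := by
    intro t ht
    by_contra hc
    set c := ψ t with hcdef
    have hn : ‖star c * c‖ ≠ 0 := by
      rw [CStarRing.norm_star_mul_self]
      simpa using hc
    set r : ℝ := ‖star c * c‖⁻¹ with hr
    let s := ι (S.Θ ((r : ℂ) • star c))
    have hs1 : ψ s = (r : ℂ) • star c := by rw [hψι, S.right_inv]
    have hst : S.Φ (s * t) = 0 := by rw [S.map_mul, ht, mul_zero]
    obtain ⟨v, hv, hdist⟩ := Metric.mem_closure_iff.1 (S.ker _ hst) 1 one_pos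
    obtain ⟨⟨u, rfl⟩, hv0⟩ := S.span v hv
    rw [dist_eq_norm] at hdist
    obtain ⟨⟨z, hz⟩, ⟨z', hz'⟩⟩ := BS_neumann _ hdist
    have hq := BS_quasi _ _ _ hz hz'
    have hq2 := hq.map ψ
    rw [map_neg, map_sub, hψι, hv0, sub_zero, map_mul, hs1, smul_mul_assoc] at hq2
    refine BS_not_quasi _ ?_ ?_ hq2
    · have hrr : (r : ℂ) = star ((√r : ℝ) : ℂ) * ((√r : ℝ) : ℂ) := by
        have h0 : 0 ≤ r := by positivity
        rw [Complex.star_def, Complex.conj_ofReal, ← Complex.ofReal_mul, Real.mul_self_sqrt h0]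
      rw [hrr, ← smul_mul_smul_comm, ← star_smul]
      exact star_mul_self_nonneg _
    · rw [norm_smul, hr]
      simp only [Complex.norm_real, norm_inv, norm_norm]
      exact inv_mul_cancel₀ hn
  have h1 : S.Φ (x - ι (S.Θ (S.Φ x))) = 0 := by rw [map_sub, S.right_inv, sub_self]
  have h2 := key _ h1
  rw [map_sub, hψι, S.right_inv, sub_eq_zero, hψ] at h2
  rw [← h2, star_star]

lemma BS_max_ideal {X : Type*} [NonUnitalNormedRing X] [NormedSpace ℂ X] [CompleteSpace X]
    [IsScalarTower ℂ X X] [SMulCommClass ℂ X X] (g : X) (hg : ¬ ∃ z, z - z * g = g) :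
    ∃ L : Submodule ℂ X, (∀ y, ∀ l ∈ L, y * l ∈ L) ∧ (∀ z, z - z * g ∈ L) ∧ g ∉ L ∧
      IsClosed (L : Set X) ∧
      ∀ L' : Submodule ℂ X, (∀ y, ∀ l ∈ L', y * l ∈ L') → L ≤ L' → g ∉ L' → L' ≤ L := by
  let 𝒮 : Set (Submodule ℂ X) :=
    {L | (∀ y, ∀ l ∈ L, y * l ∈ L) ∧ (∀ z, z - z * g ∈ L) ∧ g ∉ L}
  let J : Submodule ℂ X := LinearMap.range (LinearMap.id - LinearMap.mulRight ℂ g)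
  have hJ : J ∈ 𝒮 := by
    refine ⟨?_, fun z => ⟨z, rfl⟩, ?_⟩
    · rintro y _ ⟨z, rfl⟩
      refine ⟨y * z, ?_⟩
      change y * z - y * z * g = y * (z - z * g)
      rw [mul_sub, mul_assoc]
    · rintro ⟨z, hz⟩
      exact hg ⟨z, hz⟩
  obtain ⟨L, -, hL⟩ := zorn_le_nonempty₀ 𝒮 (by
    intro c hc hchain y hy
    refine ⟨sSup c, ?_, fun z hz => le_sSup hz⟩
    have hmem : ∀ x, x ∈ sSup c ↔ ∃ L ∈ c, x ∈ L := fun x =>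
      Submodule.mem_sSup_of_directed ⟨y, hy⟩ hchain.directedOn
    refine ⟨?_, ?_, ?_⟩
    · intro a l hl
      rw [hmem] at hl ⊢
      obtain ⟨L, hLc, h⟩ := hl
      exact ⟨L, hLc, (hc hLc).1 a l h⟩
    · intro z
      rw [hmem]
      exact ⟨y, hy, (hc hy).2.1 z⟩
    · rw [hmem]
      rintro ⟨L, hLc, h⟩
      exact (hc hLc).2.2 h) J hJ
  obtain ⟨h1, h2, h3⟩ := hL.prop
  have hmax : ∀ L' : Submodule ℂ X, (∀ y, ∀ l ∈ L', y * l ∈ L') → L ≤ L' → g ∉ L' → L' ≤ L := by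
    intro L' h hle hgL
    exact hL.le_of_ge ⟨h, fun z => hle (h2 z), hgL⟩ hle
  refine ⟨L, h1, h2, h3, ?_, hmax⟩
  have hcl : L.topologicalClosure ≤ L := by
    apply hmax _ _ L.le_topologicalClosure
    · intro hgc
      obtain ⟨l, hl, hd⟩ := Metric.mem_closure_iff.1 hgc 1 one_pos
      rw [dist_eq_norm] at hd
      obtain ⟨⟨z, hz⟩, -⟩ := BS_neumann _ hd
      apply h3
      have : g = (z - z * g) + z * l + l := by
        rw [mul_sub] at hz
        have e : g = (z - (z * g - z * l)) + l := by rw [hz]; abel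
        nth_rewrite 1 [e]
        abel
      rw [this]
      exact L.add_mem (L.add_mem (h2 z) (h1 _ _ hl)) hl
    · intro y l hl
      exact map_mem_closure (f := fun l => y * l) (by fun_prop) hl (fun l hl => h1 y l hl)
  have : L.topologicalClosure = L := le_antisymm hcl L.le_topologicalClosure
  rw [← this]
  exact L.isClosed_topologicalClosure

lemma BS_max_prime {X : Type*} [NonUnitalNormedRing X] [NormedSpace ℂ X] [CompleteSpace X]
    [IsScalarTower ℂ X X] [SMulCommClass ℂ X X] (g : X) (hg : ¬ ∃ z, z - z * g = g) :
    ∃ L K : Submodule ℂ X, (∀ y, ∀ l ∈ L, y * l ∈ L) ∧ (∀ z, z - z * g ∈ L) ∧ g ∉ L ∧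
      IsClosed (K : Set X) ∧ K ≤ L ∧ (∀ y, ∀ l ∈ K, y * l ∈ K) ∧ (∀ l ∈ K, ∀ y, l * y ∈ K) ∧
      (∀ x, (∀ y, y * x ∈ K) → x ∈ K) ∧ (∀ x, (∀ y, x * y ∈ K) → x ∈ K) ∧
      (∀ u v, (∀ y, u * y * v ∈ K) → u ∈ K ∨ v ∈ K) := by
  obtain ⟨L, h1, h2, h3, hcl, hmax⟩ := BS_max_ideal g hg
  have big : ∀ L' : Submodule ℂ X, (∀ y, ∀ l ∈ L', y * l ∈ L') → L ≤ L' → ¬ L' ≤ L →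
      ∀ w, w ∈ L' := by
    intro L' hl hle hne w
    have hgL : g ∈ L' := by
      by_contra hcon
      exact hne (hmax L' hl hle hcon)
    have : w = (w - w * g) + w * g := by abel
    rw [this]
    exact L'.add_mem (hle (h2 w)) (hl _ _ hgL)
  have NA : ∀ e, (∀ x, x * e ∈ L) → e ∈ L := by
    intro e he
    by_contra hcon
    have hb := big (L ⊔ Submodule.span ℂ {e}) (by
      intro y l hl
      obtain ⟨a, ha, b, hb, rfl⟩ := Submodule.mem_sup.1 hl
      obtain ⟨r, rfl⟩ := Submodule.mem_span_singleton.1 hb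
      apply Submodule.mem_sup_left
      rw [mul_add, mul_smul_comm]
      exact L.add_mem (h1 _ _ ha) (L.smul_mem _ (he _))) le_sup_left (by
      intro hle
      exact hcon (hle (Submodule.mem_sup_right (Submodule.mem_span_singleton_self e))))
    have hXL : ∀ y w, y * w ∈ L := by
      intro y w
      obtain ⟨a, ha, b, hb', hab⟩ := Submodule.mem_sup.1 (hb w)
      obtain ⟨r, rfl⟩ := Submodule.mem_span_singleton.1 hb'
      rw [← hab, mul_add, mul_smul_comm]
      exact L.add_mem (h1 _ _ ha) (L.smul_mem _ (he _))
    apply h3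
    have : g = (g - g * g) + g * g := by abel
    rw [this]
    exact L.add_mem (h2 _) (hXL _ _)
  let K : Submodule ℂ X :=
    { carrier := {x | ∀ z, x * z ∈ L}
      add_mem' := fun {a b} ha hb z => by rw [add_mul]; exact L.add_mem (ha z) (hb z)
      zero_mem' := fun z => by rw [zero_mul]; exact L.zero_mem
      smul_mem' := fun c x hx z => by rw [smul_mul_assoc]; exact L.smul_mem _ (hx z) }
  have hK : ∀ x, x ∈ K ↔ ∀ z, x * z ∈ L := fun _ => Iff.rfl
  have hKL : K ≤ L := by
    intro x hx
    have : x = (x - x * g) + x * g := by abel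
    rw [this]
    exact L.add_mem (h2 _) (hx g)
  refine ⟨L, K, h1, h2, h3, ?_, hKL, ?_, ?_, ?_, ?_, ?_⟩
  · have : (K : Set X) = ⋂ z, (fun x => x * z) ⁻¹' (L : Set X) := by
      ext x
      rw [Set.mem_iInter]
      exact hK x
    rw [this]
    exact isClosed_iInter fun z => hcl.preimage (by fun_prop)
  · intro y l hl z
    rw [mul_assoc]
    exact h1 _ _ (hl z)
  · intro l hl y z
    rw [mul_assoc]
    exact hl _
  · intro x hx z
    apply NA
    intro y
    rw [← mul_assoc]
    exact hx y z
  · intro x hx z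
    exact hKL (hx z)
  · intro u v huv
    by_contra hcon
    push Not at hcon
    obtain ⟨hu, hv⟩ := hcon
    obtain ⟨z, hz⟩ : ∃ z, v * z ∉ L := by
      by_contra hc; push Not at hc; exact hv hc
    obtain ⟨y, hy⟩ : ∃ y, y * (v * z) ∉ L := by
      by_contra hc; push Not at hc; exact hz (NA _ hc)
    have hb := big (L ⊔ LinearMap.range (LinearMap.mulRight ℂ (v * z))) (by
      intro y l hl
      obtain ⟨a, ha, b, ⟨c, rfl⟩, rfl⟩ := Submodule.mem_sup.1 hl
      rw [mul_add]
      refine Submodule.add_mem_sup (h1 _ _ ha) ⟨y * c, ?_⟩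
      change y * c * (v * z) = y * (c * (v * z))
      rw [mul_assoc]) le_sup_left (by
      intro hle
      exact hy (hle (Submodule.mem_sup_right ⟨y, rfl⟩)))
    apply hu
    intro w
    obtain ⟨a, ha, b, ⟨c, rfl⟩, hab⟩ := Submodule.mem_sup.1 (hb w)
    rw [← hab, mul_add]
    refine L.add_mem (h1 _ _ ha) ?_
    change u * (c * (v * z)) ∈ L
    have := huv c z
    rwa [mul_assoc, mul_assoc] at this

lemma BS_main {A B X : Type u}
    [NonUnitalCStarAlgebra A] [NonUnitalCStarAlgebra B]
    [NonUnitalNormedRing X] [StarRing X] [NormedSpace ℂ X] [CompleteSpace X]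
    [IsScalarTower ℂ X X] [SMulCommClass ℂ X X]
    (ι : A ⊗[ℂ] B →ₗ[ℂ] X) (hX : IsTensorCompletion bsProjNorm X ι)
    (hA : IsSubhomogeneous A) (g : X) (hg : ¬ ∃ z, z - z * g = g) :
    ∃ (P : Submodule ℂ A) (k : ℕ) (S : BSRep ι P k),
      (∀ x, S.Φ (star x) = star (S.Φ x)) ∧ ¬ ∃ m, m - m * S.Φ g = S.Φ g := by
  obtain ⟨L, K, h1, h2, h3, hcl, hKL, kl, kr, kl', kr', kp⟩ := BS_max_prime g hg
  -- extension from the range of `ι` to everything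
  have dense_mem : ∀ f : X → X, Continuous f → (∀ x y, f (x + y) = f x + f y) →
      (∀ a b, f (ι (a ⊗ₜ[ℂ] b)) ∈ K) → ∀ x, f x ∈ K := by
    intro f hf hadd hab x
    refine hX.dense.induction_on x (hcl.preimage hf) ?_
    intro u
    change f (ι u) ∈ K
    induction u using TensorProduct.induction_on with
    | zero =>
      have := hadd 0 0
      rw [add_zero, left_eq_add] at this
      rw [map_zero, this]
      exact K.zero_mem
    | tmul a b => exact hab a b
    | add u v hu hv =>
      rw [map_add, hadd]
      exact K.add_mem hu hv
  let P : Submodule ℂ A :=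
    { carrier := {a | ∀ b, ι (a ⊗ₜ[ℂ] b) ∈ K}
      add_mem' := fun {a c} ha hc b => by
        rw [TensorProduct.add_tmul, map_add]; exact K.add_mem (ha b) (hc b)
      zero_mem' := fun b => by rw [TensorProduct.zero_tmul, map_zero]; exact K.zero_mem
      smul_mem' := fun c x hx b => by
        rw [← TensorProduct.smul_tmul', map_smul]; exact K.smul_mem _ (hx b) }
  have hP : ∀ a, a ∈ P ↔ ∀ b, ι (a ⊗ₜ[ℂ] b) ∈ K := fun _ => Iff.rfl
  have pl : ∀ a : A, ∀ p ∈ P, a * p ∈ P := by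
    intro a p hp b
    apply kl'
    refine dense_mem (fun y => y * ι ((a * p) ⊗ₜ[ℂ] b)) (by fun_prop) (fun x y => add_mul _ _ _) ?_
    intro c d
    rw [hX.mul_tmul, ← mul_assoc, ← hX.mul_tmul]
    exact kl _ _ (hp b)
  have pr : ∀ p ∈ P, ∀ a : A, p * a ∈ P := by
    intro p hp a b
    apply kr'
    refine dense_mem (fun y => ι ((p * a) ⊗ₜ[ℂ] b) * y) (by fun_prop) (fun x y => mul_add _ _ _) ?_
    intro c d
    rw [hX.mul_tmul, mul_assoc, ← hX.mul_tmul]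
    exact kr _ (hp b) _
  have pcl : IsClosed (P : Set A) := by
    have : (P : Set A) = ⋂ b, (fun a => ι (a ⊗ₜ[ℂ] b)) ⁻¹' (K : Set X) := by
      ext x
      rw [Set.mem_iInter]
      exact hP x
    rw [this]
    refine isClosed_iInter fun b => hcl.preimage ?_
    exact ((ι.comp ((TensorProduct.mk ℂ A B).flip b)).mkContinuous ‖b‖ (fun a => by
      change ‖ι (a ⊗ₜ[ℂ] b)‖ ≤ _
      rw [hX.norm_eq, mul_comm]
      exact BS_tmul_norm _ _)).continuous
  have pp : ∀ a c : A, (∀ y, a * y * c ∈ P) → a ∈ P ∨ c ∈ P := by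
    intro a c hac
    by_contra hcon
    push Not at hcon
    obtain ⟨ha, hc⟩ := hcon
    obtain ⟨b, hb⟩ : ∃ b, ι (a ⊗ₜ[ℂ] b) ∉ K := by
      by_contra hcon; push Not at hcon; exact ha hcon
    apply hc
    intro d
    refine (kp (ι (a ⊗ₜ[ℂ] b)) (ι (c ⊗ₜ[ℂ] d)) ?_).resolve_left hb
    refine dense_mem (fun y => ι (a ⊗ₜ[ℂ] b) * y * ι (c ⊗ₜ[ℂ] d)) (by fun_prop)
      (fun x y => by rw [mul_add, add_mul]) ?_
    intro y z
    rw [hX.mul_tmul, hX.mul_tmul]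
    exact hac y _
  have pne : ∃ a, a ∉ P := by
    by_contra hcon
    push Not at hcon
    apply h3
    apply hKL
    exact dense_mem (fun x => x) continuous_id (fun _ _ => rfl) (fun a b => hcon a b) g
  obtain ⟨ρ, hρ⟩ := BS_prime_irrep hA P pl pr pcl pp pne
  obtain ⟨n, hn⟩ := hA
  obtain ⟨k, ⟨M⟩⟩ := BS_exists_mat P ρ hρ (hn ρ).1
  obtain ⟨S, hS⟩ := BS_exists_rep ι hX P k M
  refine ⟨P, k, S, BS_rep_star ι P k S hS, ?_⟩
  rintro ⟨m, hm⟩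
  have hker : ∀ x, S.Φ x = 0 → x ∈ K := by
    intro x hx
    have hle : BSspan ι P ≤ K := by
      apply Submodule.span_le.2
      rintro _ ⟨p, hp, b, rfl⟩
      exact hp b
    exact closure_minimal (fun v hv => hle hv) hcl (S.ker x hx)
  set w := ι (S.Θ m) with hw
  have hz : S.Φ (w - w * g - g) = 0 := by
    rw [map_sub, map_sub, S.map_mul, S.right_inv, hm, sub_self]
  have hzL := hKL (hker _ hz)
  apply h3
  have : g = (w - w * g) - (w - w * g - g) := by abel
  rw [this]
  exact L.sub_mem (h2 w) hzL

lemma BS_left_quasi {A B X : Type u}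
    [NonUnitalCStarAlgebra A] [NonUnitalCStarAlgebra B]
    [NonUnitalNormedRing X] [StarRing X] [NormedSpace ℂ X] [CompleteSpace X]
    [IsScalarTower ℂ X X] [SMulCommClass ℂ X X]
    (ι : A ⊗[ℂ] B →ₗ[ℂ] X) (hX : IsTensorCompletion bsProjNorm X ι)
    (hA : IsSubhomogeneous A) (x g : X) (c : ℂ) (hc0 : c ≠ 0) (hc : ¬ (c.im = 0 ∧ 0 ≤ c.re))
    (hg : ∀ (P : Submodule ℂ A) (k : ℕ) (S : BSRep ι P k),
      (∀ x, S.Φ (star x) = star (S.Φ x)) → S.Φ g = c⁻¹ • (star (S.Φ x) * S.Φ x)) :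
    ∃ z, z - z * g = g := by
  let _ : PartialOrder B := CStarAlgebra.spectralOrder _
  have _ : StarOrderedRing B := CStarAlgebra.spectralOrderedRing _
  by_contra hcon
  obtain ⟨P, k, S, hS, hm⟩ := BS_main ι hX hA g hcon
  apply hm
  rw [hg P k S hS]
  exact BS_pos_quasi (S.Φ x) c hc0 hc


end BSHelpers

/-- If `A` is a subhomogeneous C⋆-algebra and `B` any C⋆-algebra, then the
Banach space projective tensor product `A ⊗_γ B`, with its canonical Banach `*`-algebra
structure (realized as the tensor completion `X` for the norm `γ`), is symmetric: every
element of the form `x* x` has nonnegative (quasi)spectrum. -/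
theorem bsProjTensor_symmetric_of_subhomogeneous {A B X : Type u}
    [NonUnitalCStarAlgebra A] [NonUnitalCStarAlgebra B]
    [NonUnitalNormedRing X] [StarRing X] [NormedSpace ℂ X] [CompleteSpace X]
    [IsScalarTower ℂ X X] [SMulCommClass ℂ X X]
    (ι : A ⊗[ℂ] B →ₗ[ℂ] X) (hX : IsTensorCompletion bsProjNorm X ι)
    (hA : IsSubhomogeneous A) :
    ∀ x : X, quasispectrum ℂ (star x * x) ⊆ {z : ℂ | z.im = 0 ∧ 0 ≤ z.re} := by
  intro x c hmem
  change c.im = 0 ∧ 0 ≤ c.re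
  by_contra hc
  have hc0 : c ≠ 0 := by
    rintro rfl
    exact hc (by simp)
  set g := c⁻¹ • (star x * x) with hg
  obtain ⟨z, hz⟩ := BS_left_quasi ι hX hA x g c hc0 hc (fun P k S hS => by
    rw [hg, map_smul, S.map_mul, hS])
  obtain ⟨z', hz'⟩ := BS_left_quasi ι hX hA x (star g) (star c) (star_ne_zero.2 hc0)
    (by simpa using hc) (fun P k S hS => by
      rw [hS, hg, map_smul, S.map_mul, hS, star_smul, star_mul, star_star, star_inv₀])
  have hr : star z' - g * star z' = g := by
    have := congrArg star hz'
    rwa [star_sub, star_mul, star_star] at this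
  have hq := BS_quasi g z (star z') hz hr
  apply hmem (IsUnit.mk0 c hc0)
  convert hq using 2
  rw [hg, Units.smul_def, Units.val_inv_eq_inv_val, IsUnit.unit_spec]

end
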